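/- arXiv:1606.01724 — 3 statements merged into one kernel-verified Lean document; each statement's English description precedes it below -/
import Mathlib

section
/- Let a_* be the unique positive parameter for which f(·;a_*) is positive on [0,∞) and decays like a multiple of r^{-(N-1)/(p-1)} e^{-r/(p-1)} as r → ∞. Then for every a ∈ (0,a_*), the solution f(·;a) satisfies f(r;a) > 0 for all r ≥ 0 and ((2-p)r/(p-1))^{(p-1)/(2-p)} · f(r;a) → 1 as r → ∞. -/
/-!
Put `m = 1 / (p - 1) > 1`, `n = N - 1`, `G = -|f'|^{p-2} f'` and `ρ = r^n e^r`. While `f > 0` one has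
`G ≥ 0`, and the profile equation becomes the system `f' = -G^m`, `(ρ G)' = ρ f`. In the variable
`s = ∫₀ʳ ρ` this is an Emden–Fowler equation for `w = ρ G`, and the proof compares a solution
`(f, G)` with initial value `a < a_*` to the fast-decaying solution `(U, V)` through the Pohozaev
functional

  `J_f = s f² / 2 - ρ G f / 2 + s G^{m+1} / (m + 1)`,  `J_f' = G^{m+1} ((r + n) / r) z`,

where `z` depends only on `r` and, by subcriticality, is positive before some `r₀` and negative
afterwards (`zFun_sign`). Fast decay gives `J_U → 0` (`tendsto_poh_of_fast`), and hence `J_U ≥ 0`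
(`poh_nonneg_of_tendsto`).

The quotient `q = G / V` is increasing as long as `f > 0` (`wronskian_pos`): its Wronskian increases
while `q < 1`, and at a first critical point with `q > 1` the value of `J_f - q^{m+1} J_U` would be
positive, although this function starts from a nonpositive limit and is nonincreasing. Since
`q' > 0` means `f > q U`, the solution never vanishes (`profile_pos`).

Comparing `J_f` with `q(r₀)^{m+1} J_U` then shows `J_f < 0` for large `r` (`poh_eventually_neg`).
This forces `G^m / f → 0` and `G / f → 1`, so `(f^{1-m})' → m - 1`, which is the asserted decay
(`slow_decay_of_poh_neg`).
-/

open Real Set Filter MeasureTheory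

/-- `f` is a solution of the profile equation with parameter `a`:
`f` is C¹ on `[0,∞)` with derivative `f'`, the map `r ↦ |f'(r)|^{p-2} f'(r)` is C¹ on `[0,∞)`
with derivative `F'`, the ODE
`(|f'|^{p-2}f')'(r) + ((N-1)/r)(|f'|^{p-2}f')(r) + f(r) - |f'(r)|^{p-1} = 0` holds for `r > 0`,
and `f 0 = a`, `f' 0 = 0`. -/
def IsProfileSol (N : ℕ) (p a : ℝ) (f f' F' : ℝ → ℝ) : Prop :=
  (∀ r ∈ Ici (0:ℝ), HasDerivWithinAt f (f' r) (Ici 0) r) ∧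
  ContinuousOn f' (Ici 0) ∧
  (∀ r ∈ Ici (0:ℝ), HasDerivWithinAt (fun s => |f' s| ^ (p - 2) * f' s) (F' r) (Ici 0) r) ∧
  ContinuousOn F' (Ici 0) ∧
  (∀ r, 0 < r →
    F' r + (((N : ℝ) - 1) / r) * (|f' r| ^ (p - 2) * f' r) + f r - |f' r| ^ (p - 1) = 0) ∧
  f 0 = a ∧ f' 0 = 0

/-- `g(r;a) = -|f'(r;a)|^{p-2} f'(r;a)`. -/
noncomputable def gFun (p : ℝ) (f' : ℝ → ℝ) (r : ℝ) : ℝ := -(|f' r| ^ (p - 2) * f' r)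

/-- `ρ(r) = r^{N-1} e^r`. -/
noncomputable def rho (N : ℕ) (r : ℝ) : ℝ := r ^ (N - 1) * Real.exp r

/-- the derivative of `ρ`. -/
noncomputable def rho' (N : ℕ) (r : ℝ) : ℝ :=
  (((N : ℝ) - 1) * r ^ (N - 2) + r ^ (N - 1)) * Real.exp r

/-- `w(r;a) = ρ(r) g(r;a)`. -/
noncomputable def wFun (N : ℕ) (p : ℝ) (f' : ℝ → ℝ) (r : ℝ) : ℝ := rho N r * gFun p f' r

/-- the derivative `w'(r;a) = ρ'(r) g(r;a) + ρ(r) g'(r;a)`, where `g' = -F'`. -/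
noncomputable def wDeriv (N : ℕ) (p : ℝ) (f' F' : ℝ → ℝ) (r : ℝ) : ℝ :=
  rho' N r * gFun p f' r - rho N r * F' r

/-- The solution with parameter `a` is positive on `[0,∞)` and decays like
`c r^{-(N-1)/(p-1)} e^{-r/(p-1)}` as `r → ∞` for some `c > 0`. -/
def HasFastDecay (N : ℕ) (p a : ℝ) : Prop :=
  ∃ f f' F' : ℝ → ℝ, IsProfileSol N p a f f' F' ∧
    (∀ r, 0 ≤ r → 0 < f r) ∧
    ∃ c, 0 < c ∧
      Filter.Tendsto (fun r => f r * r ^ (((N : ℝ) - 1) / (p - 1)) * Real.exp (r / (p - 1)))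
        Filter.atTop (nhds c)

/-! ### Calculus on half-lines -/

theorem exists_first_zero {φ : ℝ → ℝ} {a b : ℝ} (hab : a ≤ b) (hc : ContinuousOn φ (Icc a b))
    (ha : 0 < φ a) (hb : φ b ≤ 0) :
    ∃ c ∈ Ioc a b, φ c = 0 ∧ ∀ x ∈ Ico a c, 0 < φ x := by
  have hS : IsCompact (Icc a b ∩ φ ⁻¹' (Iic 0)) := by
    refine isCompact_Icc.of_isClosed_subset ?_ inter_subset_left
    exact hc.preimage_isClosed_of_isClosed isClosed_Icc isClosed_Iic
  obtain ⟨c, ⟨hcI, hc0⟩, hmin⟩ := hS.exists_isLeast ⟨b, ⟨hab, le_rfl⟩, hb⟩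
  have hpos : ∀ x ∈ Ico a c, 0 < φ x := by
    intro x hx
    by_contra! h
    exact absurd (hmin ⟨⟨hx.1, hx.2.le.trans hcI.2⟩, h⟩) (not_le.2 hx.2)
  have hac : a < c := by
    rcases hcI.1.eq_or_lt with h | h
    · subst h; exact absurd hc0 (not_le.2 ha)
    · exact h
  refine ⟨c, ⟨hac, hcI.2⟩, le_antisymm hc0 ?_, hpos⟩
  have hcc : ContinuousOn φ (Icc a c) := hc.mono (Icc_subset_Icc_right hcI.2)
  have hcl : closure (Ico a c) = Icc a c := closure_Ico hac.ne
  have h2 : Tendsto φ (nhdsWithin c (Ico a c)) (nhds (φ c)) :=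
    (hcc c ⟨hac.le, le_rfl⟩).mono_left (nhdsWithin_mono _ Ico_subset_Icc_self)
  have : (nhdsWithin c (Ico a c)).NeBot := by
    rw [← mem_closure_iff_nhdsWithin_neBot, hcl]; exact ⟨hac.le, le_rfl⟩
  refine ge_of_tendsto h2 ?_
  filter_upwards [self_mem_nhdsWithin] with x hx using (hpos x hx).le

/-- A function that starts nonnegative and is nondecreasing wherever it is negative stays
nonnegative. -/
theorem nonneg_of_deriv_nonneg_where_neg {v v' : ℝ → ℝ} {R : ℝ} (hc : ContinuousOn v (Icc 0 R))
    (h0 : 0 ≤ v 0) (hd : ∀ r ∈ Ioo 0 R, HasDerivAt v (v' r) r)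
    (hn : ∀ r ∈ Ioo 0 R, v r < 0 → 0 ≤ v' r) : ∀ r ∈ Icc 0 R, 0 ≤ v r := by
  intro r hr
  by_contra! hneg
  -- `t` is the last point before `r` at which `v` is nonnegative.
  have hS : IsCompact (Icc 0 r ∩ v ⁻¹' (Ici 0)) := by
    refine isCompact_Icc.of_isClosed_subset ?_ inter_subset_left
    exact (hc.mono (Icc_subset_Icc_right hr.2)).preimage_isClosed_of_isClosed isClosed_Icc isClosed_Ici
  obtain ⟨t, ⟨htI, ht0⟩, hmax⟩ := hS.exists_isGreatest ⟨0, ⟨le_rfl, hr.1⟩, h0⟩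
  have hlt : ∀ x ∈ Ioc t r, v x < 0 := by
    intro x hx
    by_contra! h
    exact absurd (hmax ⟨⟨htI.1.trans hx.1.le, hx.2⟩, h⟩) (not_le.2 hx.1)
  have hmono : MonotoneOn v (Icc t r) := by
    refine monotoneOn_of_deriv_nonneg (convex_Icc _ _) (hc.mono (Icc_subset_Icc htI.1 hr.2)) ?_ ?_
    · intro x hx
      rw [interior_Icc] at hx
      exact (hd x ⟨htI.1.trans_lt hx.1, hx.2.trans_le hr.2⟩).differentiableAt.differentiableWithinAt
    · intro x hx
      rw [interior_Icc] at hx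
      have hx' : x ∈ Ioo 0 R := ⟨htI.1.trans_lt hx.1, hx.2.trans_le hr.2⟩
      rw [(hd x hx').deriv]
      exact hn x hx' (hlt x ⟨hx.1, hx.2.le⟩)
  have := hmono ⟨le_rfl, htI.2⟩ ⟨htI.2, le_rfl⟩ htI.2
  exact absurd (le_trans ht0 this) (not_le.2 hneg)

theorem monotoneOn_Icc_of_hasDerivAt {x x' : ℝ → ℝ} {a b : ℝ} (hc : ContinuousOn x (Icc a b))
    (hd : ∀ r ∈ Ioo a b, HasDerivAt x (x' r) r) (hn : ∀ r ∈ Ioo a b, 0 ≤ x' r) :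
    MonotoneOn x (Icc a b) := by
  refine monotoneOn_of_deriv_nonneg (convex_Icc _ _) hc ?_ ?_
  · intro r hr
    rw [interior_Icc] at hr
    exact (hd r hr).differentiableAt.differentiableWithinAt
  · intro r hr
    rw [interior_Icc] at hr
    rw [(hd r hr).deriv]; exact hn r hr

theorem strictMonoOn_Icc_of_hasDerivAt {x x' : ℝ → ℝ} {a b : ℝ} (hc : ContinuousOn x (Icc a b))
    (hd : ∀ r ∈ Ioo a b, HasDerivAt x (x' r) r) (hn : ∀ r ∈ Ioo a b, 0 < x' r) :
    StrictMonoOn x (Icc a b) := by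
  refine strictMonoOn_of_deriv_pos (convex_Icc _ _) hc ?_
  intro r hr
  rw [interior_Icc] at hr
  rw [(hd r hr).deriv]; exact hn r hr

/-- A differentiable function that decreases at a definite rate whenever it is at least `η`
is eventually below `η`. -/
theorem eventually_lt_of_deriv_le {x x' : ℝ → ℝ} {R η β : ℝ} (hβ : 0 < β)
    (hd : ∀ r, R ≤ r → HasDerivAt x (x' r) r)
    (hn : ∀ r, R ≤ r → η ≤ x r → x' r ≤ -β) : ∀ᶠ r in atTop, x r < η := by
  have hcont : ∀ b, ContinuousOn x (Icc R b) := fun b r hr =>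
    (hd r hr.1).continuousAt.continuousWithinAt
  -- the function cannot stay at or above `η`
  have hex : ∃ r1, R ≤ r1 ∧ x r1 < η := by
    by_contra! h
    have hb : R ≤ R + (|x R - η| + 1) / β := by
      have : 0 < (|x R - η| + 1) / β := by positivity
      linarith
    have hm := monotoneOn_Icc_of_hasDerivAt (x := fun r => - x r - β * r)
      (x' := fun r => - x' r - β) (a := R) (b := R + (|x R - η| + 1) / β)
      ((hcont _).neg.sub (by fun_prop))
      (fun r hr => by
        exact ((hd r hr.1.le).neg.sub ((hasDerivAt_id r).const_mul β)).congr_deriv (by ring))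
      (fun r hr => by have := hn r hr.1.le (h r hr.1.le); linarith)
    have h1 := hm ⟨le_rfl, hb⟩ ⟨hb, le_rfl⟩ hb
    have h2 := h _ hb
    have h3 : β * ((|x R - η| + 1) / β) = |x R - η| + 1 := by field_simp
    have h4 := le_abs_self (x R - η)
    simp only [mul_add] at h1
    linarith
  obtain ⟨r1, hr1, hx1⟩ := hex
  filter_upwards [eventually_ge_atTop r1] with r hr
  by_contra! hge
  -- the first return to the level `η` happens with negative slope
  obtain ⟨c, hc, hc0, hcpos⟩ := exists_first_zero (φ := fun r => η - x r) hr
    (continuousOn_const.sub ((hcont r).mono (Icc_subset_Icc_left hr1))) (by linarith) (by linarith)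
  have hRc : R ≤ c := hr1.trans hc.1.le
  have hneg : x' c < 0 := by
    have := hn c hRc (by linarith)
    linarith
  have hev := (hd c hRc).hasDerivWithinAt (s := Iio c)
  rw [hasDerivWithinAt_iff_tendsto_slope' (by simp)] at hev
  have h2 : ∀ᶠ y in nhdsWithin c (Iio c), slope x c y < 0 := hev.eventually_lt_const hneg
  have h3 : ∀ᶠ y in nhdsWithin c (Iio c), y ∈ Ioo r1 c := Ioo_mem_nhdsLT hc.1
  obtain ⟨y, hy, hyI⟩ := (h2.and h3).exists
  rw [slope_def_field, div_lt_iff_of_neg (by linarith [hyI.2])] at hy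
  have := hcpos y ⟨hyI.1.le, hyI.2⟩
  linarith

theorem tendsto_one_of_linear_ode {h b : ℝ → ℝ} {R : ℝ}
    (hd : ∀ r, R < r → HasDerivAt h (1 - h r * b r) r) (hb : Tendsto b atTop (nhds 1)) :
    Tendsto h atTop (nhds 1) := by
  have key : ∀ η > 0, (∀ᶠ r in atTop, h r < 1 + η) ∧ (∀ᶠ r in atTop, -(h r) < -1 + η) := by
    intro η hη
    have e1 : ∀ᶠ r in atTop, 1 - (1 + η) * b r < -(η / 2) := by
      have : Tendsto (fun r => 1 - (1 + η) * b r) atTop (nhds (1 - (1 + η) * 1)) :=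
        tendsto_const_nhds.sub (hb.const_mul _)
      exact this.eventually_lt_const (by linarith)
    have e2 : ∀ᶠ r in atTop, η / 2 < 1 - (1 - η) * b r := by
      have : Tendsto (fun r => 1 - (1 - η) * b r) atTop (nhds (1 - (1 - η) * 1)) :=
        tendsto_const_nhds.sub (hb.const_mul _)
      exact this.eventually_const_lt (by linarith)
    have e3 : ∀ᶠ r in atTop, 0 < b r := hb.eventually_const_lt (by norm_num)
    obtain ⟨S, hS⟩ := eventually_atTop.1 ((e1.and e2).and (e3.and (eventually_gt_atTop R)))
    constructor
    · refine eventually_lt_of_deriv_le (R := S) (β := η / 2) (by positivity)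
        (fun r hr => hd r (hS r hr).2.2) ?_
      intro r hr hle
      have := (hS r hr).1.1
      nlinarith [mul_le_mul_of_nonneg_right hle (hS r hr).2.1.le]
    · refine eventually_lt_of_deriv_le (x := fun r => -(h r)) (R := S) (β := η / 2) (by positivity)
        (fun r hr => (hd r (hS r hr).2.2).neg) ?_
      intro r hr hle
      have := (hS r hr).1.2
      have h2 : h r ≤ 1 - η := by linarith
      nlinarith [mul_le_mul_of_nonneg_right h2 (hS r hr).2.1.le]
  rw [Metric.tendsto_atTop']
  intro ε hε
  obtain ⟨S, hS⟩ := eventually_atTop.1 ((key ε hε).1.and (key ε hε).2)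
  refine ⟨S, fun r hr => ?_⟩
  have := hS r hr.le
  rw [Real.dist_eq, abs_lt]
  constructor <;> linarith [this.1, this.2]

/-- The `∞ / ∞` form of l'Hôpital's rule for the quotient by the identity. -/
theorem tendsto_div_id_of_deriv {X X' : ℝ → ℝ} {R L : ℝ}
    (hd : ∀ r, R < r → HasDerivAt X (X' r) r) (hX : Tendsto X' atTop (nhds L)) :
    Tendsto (fun r => X r / r) atTop (nhds L) := by
  rw [Metric.tendsto_atTop']
  intro ε hε
  have e1 : ∀ᶠ r in atTop, X' r < L + ε / 2 := hX.eventually_lt_const (by linarith)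
  have e2 : ∀ᶠ r in atTop, L - ε / 2 < X' r := hX.eventually_const_lt (by linarith)
  obtain ⟨S, hS⟩ := eventually_atTop.1 ((e1.and e2).and ((eventually_gt_atTop R).and
    (eventually_gt_atTop 0)))
  have up : ∀ r, S ≤ r → X r - X S ≤ (L + ε / 2) * (r - S) := by
    intro r hr
    have hm := monotoneOn_Icc_of_hasDerivAt (x := fun r => (L + ε / 2) * r - X r)
      (x' := fun r => (L + ε / 2) - X' r) (a := S) (b := r)
      (fun t ht => (ContinuousAt.continuousWithinAt
        ((by fun_prop : ContinuousAt (fun r => (L + ε / 2) * r) t).sub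
          (hd t (hS t ht.1).2.1).continuousAt)))
      (fun t ht => by
        exact (((hasDerivAt_id t).const_mul (L + ε / 2)).sub
          (hd t (hS t ht.1.le).2.1)).congr_deriv (by ring))
      (fun t ht => by linarith [(hS t ht.1.le).1.1])
    have := hm ⟨le_rfl, hr⟩ ⟨hr, le_rfl⟩ hr
    simp only at this
    linarith
  have lo : ∀ r, S ≤ r → (L - ε / 2) * (r - S) ≤ X r - X S := by
    intro r hr
    have hm := monotoneOn_Icc_of_hasDerivAt (x := fun r => X r - (L - ε / 2) * r)
      (x' := fun r => X' r - (L - ε / 2)) (a := S) (b := r)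
      (fun t ht => (ContinuousAt.continuousWithinAt
        ((hd t (hS t ht.1).2.1).continuousAt.sub
          (by fun_prop : ContinuousAt (fun r => (L - ε / 2) * r) t))))
      (fun t ht => by
        exact ((hd t (hS t ht.1.le).2.1).sub
          ((hasDerivAt_id t).const_mul (L - ε / 2))).congr_deriv (by ring))
      (fun t ht => by linarith [(hS t ht.1.le).1.2])
    have := hm ⟨le_rfl, hr⟩ ⟨hr, le_rfl⟩ hr
    simp only at this
    linarith
  set M := |X S - (L + ε / 2) * S| + |X S - (L - ε / 2) * S| + 1 with hM
  refine ⟨max S (2 * M / ε), fun r hr => ?_⟩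
  have hrS : S ≤ r := (le_max_left _ _).trans hr.le
  have hr0 : 0 < r := (hS r hrS).2.2
  have hrM : 2 * M / ε < r := (le_max_right _ _).trans_lt hr
  rw [div_lt_iff₀ hε] at hrM
  have h1 := up r hrS
  have h2 := lo r hrS
  have a1 := le_abs_self (X S - (L + ε / 2) * S)
  have a2 := neg_abs_le (X S - (L - ε / 2) * S)
  have a3 := abs_nonneg (X S - (L + ε / 2) * S)
  have a4 := abs_nonneg (X S - (L - ε / 2) * S)
  have e : X r / r - L = (X r - L * r) / r := by field_simp
  rw [Real.dist_eq, e, abs_lt, lt_div_iff₀ hr0, div_lt_iff₀ hr0]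
  constructor <;> nlinarith

/-! ### The weight `ρ` and its primitive -/

theorem rho_pos (N : ℕ) {r : ℝ} (hr : 0 < r) : 0 < rho N r := by
  unfold rho; positivity

theorem rho_nonneg (N : ℕ) {r : ℝ} (hr : 0 ≤ r) : 0 ≤ rho N r := by
  unfold rho; positivity

theorem continuous_rho (N : ℕ) : Continuous (rho N) := by
  unfold rho; fun_prop

theorem rho_zero {N : ℕ} (hN : 2 ≤ N) : rho N 0 = 0 := by
  unfold rho; rw [zero_pow (by omega)]; simp

theorem exp_le_rho (N : ℕ) {r : ℝ} (hr : 1 ≤ r) : Real.exp r ≤ rho N r := by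
  unfold rho
  have := one_le_pow₀ hr (n := N - 1)
  nlinarith [Real.exp_pos r]

theorem hasDerivAt_rho {N : ℕ} (hN : 2 ≤ N) {r : ℝ} (hr : 0 < r) :
    HasDerivAt (rho N) (rho N r * (1 + ((N : ℝ) - 1) / r)) r := by
  have h := (hasDerivAt_pow (N - 1) r).mul (Real.hasDerivAt_exp r)
  refine h.congr_deriv ?_
  unfold rho
  obtain ⟨k, rfl⟩ : ∃ k, N = k + 2 := ⟨N - 2, by omega⟩
  simp only [show k + 2 - 1 = k + 1 by omega, show k + 1 - 1 = k by omega]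
  push_cast
  field_simp
  ring

/-- The primitive `s(r) = ∫₀ʳ ρ`, which serves as the natural independent variable:
in terms of `s` the profile equation becomes an Emden–Fowler equation for `w`. -/
noncomputable def sInt (N : ℕ) (r : ℝ) : ℝ := ∫ t in (0 : ℝ)..r, rho N t

theorem hasDerivAt_sInt (N : ℕ) (r : ℝ) : HasDerivAt (sInt N) (rho N r) r :=
  (continuous_rho N).integral_hasStrictDerivAt 0 r |>.hasDerivAt

theorem continuous_sInt (N : ℕ) : Continuous (sInt N) :=
  continuous_iff_continuousAt.2 fun r => (hasDerivAt_sInt N r).continuousAt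

theorem sInt_zero (N : ℕ) : sInt N 0 = 0 := by simp [sInt]

theorem sInt_pos (N : ℕ) {r : ℝ} (hr : 0 < r) : 0 < sInt N r := by
  have h := strictMonoOn_Icc_of_hasDerivAt (continuous_sInt N).continuousOn (a := 0) (b := r)
    (fun t _ => hasDerivAt_sInt N t) (fun t ht => rho_pos N ht.1)
  have := h ⟨le_rfl, hr.le⟩ ⟨hr.le, le_rfl⟩ hr
  rwa [sInt_zero] at this

theorem sInt_le_rho {N : ℕ} (hN : 2 ≤ N) {r : ℝ} (hr : 0 ≤ r) : sInt N r ≤ rho N r := by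
  have hn : (2 : ℝ) ≤ N := by exact_mod_cast hN
  have h := monotoneOn_Icc_of_hasDerivAt (x := fun r => rho N r - sInt N r) (a := 0) (b := r)
    ((continuous_rho N).sub (continuous_sInt N)).continuousOn
    (fun t ht => (hasDerivAt_rho hN ht.1).sub (hasDerivAt_sInt N t))
    (fun t ht => by
      have h1 := rho_pos N ht.1
      have : 0 ≤ ((N : ℝ) - 1) / t := div_nonneg (by linarith) ht.1.le
      nlinarith [mul_nonneg h1.le this])
  have := h ⟨le_rfl, hr⟩ ⟨hr, le_rfl⟩ hr
  simp only [sInt_zero, rho_zero hN] at this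
  linarith

theorem tendsto_rho_div_sInt {N : ℕ} (hN : 2 ≤ N) :
    Tendsto (fun r => rho N r / sInt N r) atTop (nhds 1) := by
  have h : Tendsto (fun r => sInt N r / rho N r) atTop (nhds 1) := by
    refine tendsto_one_of_linear_ode (R := 0) (b := fun r => 1 + ((N : ℝ) - 1) / r) ?_ ?_
    · intro r hr
      have h0 := rho_pos N hr
      refine ((hasDerivAt_sInt N r).div (hasDerivAt_rho hN hr) h0.ne').congr_deriv ?_
      field_simp
    · have : Tendsto (fun r : ℝ => ((N : ℝ) - 1) / r) atTop (nhds 0) :=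
        tendsto_const_nhds.div_atTop tendsto_id
      simpa using this.const_add 1
  have h2 := h.inv₀ one_ne_zero
  simpa [inv_div] using h2

/-- The function whose sign is the sign of the derivative of the Pohozaev functional. -/
noncomputable def zFun (N : ℕ) (m r : ℝ) : ℝ :=
  (m + 3) / (2 * (m + 1)) * (rho N r * (r / (r + ((N : ℝ) - 1)))) - sInt N r

/-- `zFun` is positive up to some `r₀` and negative afterwards. Its derivative is
`ρ (c (1 + n / (r + n)²) - 1)` with `c < 1 < c (1 + 1 / n)`, so it increases and then decreases
to `-∞`; the second inequality is Sobolev subcriticality. -/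
theorem zFun_sign {N : ℕ} (hN : 2 ≤ N) {m : ℝ} (hm : 1 < m)
    (hmN : m * ((N : ℝ) - 1) < N + 1) :
    ∃ r0, 0 < r0 ∧ (∀ r ∈ Ioo 0 r0, 0 < zFun N m r) ∧ ∀ r, r0 < r → zFun N m r < 0 := by
  have hn2 : (2 : ℝ) ≤ N := by exact_mod_cast hN
  set n : ℝ := (N : ℝ) - 1 with hn
  have hn1 : 1 ≤ n := by linarith
  set c : ℝ := (m + 3) / (2 * (m + 1)) with hc
  have hc1 : c < 1 := by rw [hc, div_lt_one (by linarith)]; linarith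
  have hc0 : 0 < c := by rw [hc]; apply div_pos <;> linarith
  have hcn : n < c * (n + 1) := by
    rw [hc, div_mul_eq_mul_div, lt_div_iff₀ (by linarith)]
    nlinarith
  have hd : ∀ r, 0 < r → HasDerivAt (zFun N m) (rho N r * (c * (1 + n / (r + n) ^ 2) - 1)) r := by
    intro r hr
    have hrn : r + n ≠ 0 := by linarith
    have h1 : HasDerivAt (fun r : ℝ => r / (r + n)) ((1 * (r + n) - r * 1) / (r + n) ^ 2) r :=
      (hasDerivAt_id r).div ((hasDerivAt_id r).add_const n) hrn
    have h2 := (((hasDerivAt_rho hN hr).mul h1).const_mul c).sub (hasDerivAt_sInt N r)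
    refine h2.congr_deriv ?_
    rw [← hn]
    field_simp
    ring
  have hcont : ContinuousOn (zFun N m) (Ici 0) := by
    unfold zFun
    refine ContinuousOn.sub (continuousOn_const.mul ((continuous_rho N).continuousOn.mul ?_))
      (continuous_sInt N).continuousOn
    refine continuousOn_id.div (by fun_prop) ?_
    intro x hx
    have : (0 : ℝ) ≤ x := hx
    simp only [ne_eq]; linarith
  -- the critical point, where `(r + n)² = c n / (1 - c)`
  set b : ℝ := √(c * n / (1 - c)) with hb
  have hbsq : b ^ 2 * (1 - c) = c * n := by
    rw [hb, Real.sq_sqrt (div_nonneg (by positivity) (by linarith))]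
    have : 1 - c ≠ 0 := by linarith
    field_simp
  have hb0 : 0 ≤ b := Real.sqrt_nonneg _
  have hbn : n < b := by
    by_contra! h
    have : b ^ 2 ≤ n ^ 2 := pow_le_pow_left₀ hb0 h 2
    nlinarith
  have hsgn : ∀ r, 0 < r → c * (1 + n / (r + n) ^ 2) - 1 = (1 - c) * (b ^ 2 - (r + n) ^ 2) / (r + n) ^ 2 := by
    intro r hr
    have hrn : r + n ≠ 0 := by linarith
    field_simp
    linarith
  have hz0 : zFun N m 0 = 0 := by simp [zFun, sInt_zero, rho_zero hN]
  have hmono : StrictMonoOn (zFun N m) (Icc 0 (b - n)) := by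
    refine strictMonoOn_Icc_of_hasDerivAt (hcont.mono Icc_subset_Ici_self) (fun r hr => hd r hr.1) ?_
    intro r hr
    rw [hsgn r hr.1]
    have h1 : 0 < b ^ 2 - (r + n) ^ 2 := by nlinarith [hr.1, hr.2]
    have h2 : 0 < 1 - c := by linarith
    have h3 := rho_pos N hr.1
    have h4 : 0 < r + n := by linarith [hr.1]
    positivity
  have hanti : ∀ R, StrictMonoOn (fun r => - zFun N m r) (Icc (b - n) R) := by
    intro R
    refine strictMonoOn_Icc_of_hasDerivAt
      ((hcont.mono fun x hx => le_trans (by linarith) hx.1).neg)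
      (fun r hr => (hd r (by linarith [hr.1])).neg) ?_
    intro r hr
    have hr0 : 0 < r := by linarith [hr.1]
    rw [hsgn r hr0]
    have h1 : 0 < (r + n) ^ 2 - b ^ 2 := by nlinarith [hr.1, hr.2]
    have h2 : 0 < 1 - c := by linarith
    have h3 := rho_pos N hr0
    have h4 : 0 < r + n := by linarith [hr.1]
    have : -(rho N r * ((1 - c) * (b ^ 2 - (r + n) ^ 2) / (r + n) ^ 2)) =
      rho N r * ((1 - c) * ((r + n) ^ 2 - b ^ 2) / (r + n) ^ 2) := by ring
    rw [this]
    positivity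
  have hzpos : 0 < zFun N m (b - n) := by
    have := hmono ⟨le_rfl, by linarith⟩ ⟨by linarith, le_rfl⟩ (by linarith : (0 : ℝ) < b - n)
    rwa [hz0] at this
  have hev : ∀ᶠ r in atTop, zFun N m r < 0 := by
    refine eventually_lt_of_deriv_le (R := b + 1) (β := (1 - c) * (1 - b ^ 2 / (b + 1) ^ 2))
      ?_ (fun r hr => hd r (by linarith)) ?_
    · have : b ^ 2 / (b + 1) ^ 2 < 1 := by
        rw [div_lt_one (by positivity)]; nlinarith
      exact mul_pos (by linarith) (by linarith)
    · intro r hr _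
      have hr0 : 0 < r := by linarith
      have hρ : 1 ≤ rho N r := by
        have := exp_le_rho N (r := r) (by linarith)
        have := Real.add_one_le_exp r
        linarith
      rw [hsgn r hr0]
      have h1 : b ^ 2 / (r + n) ^ 2 ≤ b ^ 2 / (b + 1) ^ 2 := by
        apply div_le_div_of_nonneg_left (by positivity) (by positivity)
        apply pow_le_pow_left₀ (by positivity); linarith
      have h2 : (1 - c) * (b ^ 2 - (r + n) ^ 2) / (r + n) ^ 2
          = -((1 - c) * (1 - b ^ 2 / (r + n) ^ 2)) := by
        have hrn : r + n ≠ 0 := by linarith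
        field_simp; ring
      rw [h2]
      have h3 : b ^ 2 / (b + 1) ^ 2 < 1 := by
        rw [div_lt_one (by positivity)]; nlinarith
      have h4 : (1 - c) * (1 - b ^ 2 / (b + 1) ^ 2) ≤ (1 - c) * (1 - b ^ 2 / (r + n) ^ 2) :=
        mul_le_mul_of_nonneg_left (by linarith) (by linarith)
      have h5 : 0 ≤ (1 - c) * (1 - b ^ 2 / (r + n) ^ 2) :=
        mul_nonneg (by linarith) (by linarith)
      nlinarith
  obtain ⟨R, hR1, hR2⟩ := (hev.and (eventually_ge_atTop (b - n))).exists
  obtain ⟨r0, hr0, hr0z, hr0p⟩ := exists_first_zero (φ := zFun N m) hR2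
    (hcont.mono fun x hx => le_trans (by linarith) hx.1) hzpos hR1.le
  refine ⟨r0, by linarith [hr0.1], ?_, ?_⟩
  · intro r hr
    rcases le_or_gt (b - n) r with h | h
    · exact hr0p r ⟨h, hr.2⟩
    · have := hmono ⟨le_rfl, by linarith⟩ ⟨hr.1.le, h.le⟩ hr.1
      rwa [hz0] at this
  · intro r hr
    have := hanti r ⟨hr0.1.le, hr.le⟩ ⟨by linarith [hr0.1], le_rfl⟩ hr
    simp only at this
    linarith

/-! ### The first-order system and the Pohozaev functional -/

/-- The profile equation as a first-order system for `f` and `G = -|f'|^{p-2} f'`, with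
`m = 1 / (p - 1)`, on an interval `(0, T)` where both are positive:
`f' = -G^m` and `G' = f - (1 + (N - 1) / r) G`. -/
structure RegSol (N : ℕ) (m a T : ℝ) (f G : ℝ → ℝ) : Prop where
  contf : ContinuousOn f (Ici 0)
  contG : ContinuousOn G (Ici 0)
  f0 : f 0 = a
  G0 : G 0 = 0
  fpos : ∀ r ∈ Ioo 0 T, 0 < f r
  Gpos : ∀ r ∈ Ioo 0 T, 0 < G r
  df : ∀ r ∈ Ioo 0 T, HasDerivAt f (-(G r ^ m)) r
  dG : ∀ r ∈ Ioo 0 T, HasDerivAt G (f r - (1 + ((N : ℝ) - 1) / r) * G r) r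

/-- Along a solution of the profile equation, `G = gFun p f'` is nonnegative as long as `f` is
positive (its only source term is `f`), which removes the absolute values from the equation. -/
theorem regSol_of_profile {N : ℕ} (hN : 2 ≤ N) {p a T : ℝ} (hp1 : 1 < p)
    {f f' F' : ℝ → ℝ} (hf : IsProfileSol N p a f f' F') (hpos : ∀ r ∈ Ico 0 T, 0 < f r) :
    RegSol N (1 / (p - 1)) a T f (gFun p f') := by
  obtain ⟨h1, h2, h3, h4, h5, h6, h7⟩ := hf
  have hp0 : 0 < p - 1 := by linarith
  have hcf : ContinuousOn f (Ici 0) := fun r hr => (h1 r hr).continuousWithinAt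
  have hcG : ContinuousOn (gFun p f') (Ici 0) := fun r hr => (h3 r hr).continuousWithinAt.neg
  have hG0 : gFun p f' 0 = 0 := by simp [gFun, h7]
  have habs : ∀ r, |gFun p f' r| = |f' r| ^ (p - 1) := by
    intro r
    unfold gFun
    rw [abs_neg, abs_mul, abs_of_nonneg (Real.rpow_nonneg (abs_nonneg _) _)]
    rcases eq_or_ne (f' r) 0 with h | h
    · rw [h, abs_zero, mul_zero, Real.zero_rpow hp0.ne']
    · have : 0 < |f' r| := abs_pos.2 h
      nth_rewrite 2 [← Real.rpow_one |f' r|]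
      rw [← Real.rpow_add this]; congr 1; ring
  have hdf : ∀ r, 0 < r → HasDerivAt f (f' r) r := fun r hr =>
    (h1 r hr.le).hasDerivAt (Ici_mem_nhds hr)
  have hdG : ∀ r, 0 < r → HasDerivAt (gFun p f')
      (f r - |gFun p f' r| - ((N : ℝ) - 1) / r * gFun p f' r) r := by
    intro r hr
    refine ((h3 r hr.le).hasDerivAt (Ici_mem_nhds hr)).neg.congr_deriv ?_
    rw [habs]
    have := h5 r hr
    unfold gFun
    linarith
  have hneg : ∀ r, 0 ≤ gFun p f' r → f' r = -(gFun p f' r ^ (1 / (p - 1))) := by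
    intro r hr
    have hle : f' r ≤ 0 := by
      by_contra! h
      have h8 : 0 < |f' r| ^ (p - 2) * f' r := mul_pos (Real.rpow_pos_of_pos (abs_pos.2 h.ne') _) h
      unfold gFun at hr
      linarith
    have h9 := habs r
    rw [abs_of_nonneg hr] at h9
    rw [h9, ← Real.rpow_mul (abs_nonneg _), mul_one_div_cancel hp0.ne', Real.rpow_one,
      abs_of_nonpos hle, neg_neg]
  -- the integrating factor for the equation on the set where `G < 0`
  have hGnn : ∀ R, R < T → ∀ r ∈ Icc 0 R, 0 ≤ gFun p f' r := by
    intro R hRT r hr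
    have hv := nonneg_of_deriv_nonneg_where_neg (R := R)
      (v := fun r => rho N r * Real.exp (-2 * r) * gFun p f' r)
      (v' := fun r => rho N r * Real.exp (-2 * r) * (f r - |gFun p f' r| - gFun p f' r))
      (((continuous_rho N).mul (by fun_prop)).continuousOn.mul (hcG.mono Icc_subset_Ici_self))
      (by simp [hG0])
      (fun r hr => by
        have e : HasDerivAt (fun r : ℝ => Real.exp (-2 * r)) (Real.exp (-2 * r) * (-2 * 1)) r :=
          ((hasDerivAt_id r).const_mul (-2)).exp
        refine (((hasDerivAt_rho hN hr.1).mul e).mul (hdG r hr.1)).congr_deriv ?_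
        simp only [Pi.mul_apply]
        ring)
      (fun r hr hlt => by
        have hρ := rho_pos N hr.1
        have he := Real.exp_pos (-2 * r)
        have hlt' : gFun p f' r < 0 := by
          by_contra! h
          exact absurd hlt (not_lt.2 (by positivity))
        have := hpos r ⟨hr.1.le, hr.2.trans hRT⟩
        rw [abs_of_neg hlt']
        have h10 : f r - -gFun p f' r - gFun p f' r = f r := by ring
        simp only [h10]
        positivity) r hr
    rcases hr.1.eq_or_lt with h | h
    · rw [← h, hG0]
    · have : 0 < rho N r * Real.exp (-2 * r) := mul_pos (rho_pos N h) (Real.exp_pos _)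
      exact nonneg_of_mul_nonneg_right hv this
  have hGnn' : ∀ r ∈ Ioo 0 T, 0 ≤ gFun p f' r := fun r hr => hGnn r hr.2 r ⟨hr.1.le, le_rfl⟩
  have hdG' : ∀ r ∈ Ioo 0 T, HasDerivAt (gFun p f')
      (f r - (1 + ((N : ℝ) - 1) / r) * gFun p f' r) r := by
    intro r hr
    refine (hdG r hr.1).congr_deriv ?_
    rw [abs_of_nonneg (hGnn' r hr)]; ring
  refine ⟨hcf, hcG, h6, hG0, fun r hr => hpos r ⟨hr.1.le, hr.2⟩, ?_, ?_, hdG'⟩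
  · intro r hr
    have hw := strictMonoOn_Icc_of_hasDerivAt (a := 0) (b := r)
      (x := fun r => rho N r * gFun p f' r) (x' := fun r => rho N r * f r)
      ((continuous_rho N).continuousOn.mul (hcG.mono Icc_subset_Ici_self))
      (fun t ht => by
        refine ((hasDerivAt_rho hN ht.1).mul (hdG' t ⟨ht.1, ht.2.trans hr.2⟩)).congr_deriv ?_
        ring)
      (fun t ht => mul_pos (rho_pos N ht.1) (hpos t ⟨ht.1.le, ht.2.trans hr.2⟩))
      ⟨le_rfl, hr.1.le⟩ ⟨hr.1.le, le_rfl⟩ hr.1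
    simp only [rho_zero hN, zero_mul] at hw
    exact pos_of_mul_pos_right hw (rho_pos N hr.1).le
  · intro r hr
    exact (hdf r hr.1).congr_deriv (hneg r (hGnn' r hr))

/-- The Pohozaev functional `J = s f² / 2 - ρ G f / 2 + s G^{m+1} / (m + 1)`. -/
noncomputable def poh (N : ℕ) (m : ℝ) (f G : ℝ → ℝ) (r : ℝ) : ℝ :=
  sInt N r * f r ^ 2 / 2 - rho N r * G r * f r / 2 + sInt N r * G r ^ (m + 1) / (m + 1)

theorem poh_zero {N : ℕ} (hN : 2 ≤ N) (m : ℝ) (f G : ℝ → ℝ) : poh N m f G 0 = 0 := by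
  simp [poh, sInt_zero, rho_zero hN]

namespace RegSol

variable {N : ℕ} {m a T : ℝ} {f G : ℝ → ℝ}

theorem cont_poh (h : RegSol N m a T f G) (hm : 1 < m) : ContinuousOn (poh N m f G) (Ici 0) := by
  have c1 := (continuous_sInt N).continuousOn (s := Ici 0)
  have c2 := (continuous_rho N).continuousOn (s := Ici 0)
  have c3 : ContinuousOn (fun r => G r ^ (m + 1)) (Ici 0) :=
    h.contG.rpow_const fun r _ => Or.inr (by linarith)
  exact (((c1.mul (h.contf.pow 2)).div_const _).sub (((c2.mul h.contG).mul h.contf).div_const _)).add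
    ((c1.mul c3).div_const _)

theorem deriv_poh (h : RegSol N m a T f G) (hN : 2 ≤ N) (hm : 1 < m) {r : ℝ} (hr : r ∈ Ioo 0 T) :
    HasDerivAt (poh N m f G) (G r ^ (m + 1) * ((r + ((N : ℝ) - 1)) / r) * zFun N m r) r := by
  have hG := h.Gpos r hr
  have hr0 := hr.1
  have hn2 : (2 : ℝ) ≤ N := by exact_mod_cast hN
  have hs := hasDerivAt_sInt N r
  have hρ := hasDerivAt_rho hN hr.1
  have hf := h.df r hr
  have hg := h.dG r hr
  have hp : HasDerivAt (fun r => G r ^ (m + 1))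
      ((f r - (1 + ((N : ℝ) - 1) / r) * G r) * (m + 1) * G r ^ (m + 1 - 1)) r :=
    hg.rpow_const (Or.inl hG.ne')
  refine ((((hs.mul (hf.pow 2)).div_const 2).sub (((hρ.mul hg).mul hf).div_const 2)).add
    ((hs.mul hp).div_const (m + 1))).congr_deriv ?_
  have e1 : G r ^ (m + 1 - 1) = G r ^ m := by congr 1; ring
  have e2 : G r ^ (m + 1) = G r ^ m * G r := by rw [Real.rpow_add hG, Real.rpow_one]
  rw [e1, e2]
  unfold zFun
  have hm1 : m + 1 ≠ 0 := by linarith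
  have hrn : r + ((N : ℝ) - 1) ≠ 0 := by linarith
  simp only [Pi.mul_apply, Pi.pow_apply]
  field_simp
  ring

end RegSol

theorem tendsto_rho_atTop (N : ℕ) : Tendsto (rho N) atTop atTop := by
  refine tendsto_atTop_mono' _ ?_ Real.tendsto_exp_atTop
  filter_upwards [eventually_ge_atTop 1] with r hr using exp_le_rho N hr

/-- For a fast-decaying positive solution `w = ρ G` is bounded and `f = O(1 / ρ)`, so the Pohozaev
functional vanishes at infinity. -/
theorem tendsto_poh_of_fast {N : ℕ} (hN : 2 ≤ N) {m a c : ℝ} (hm : 1 < m) (hc : 0 < c)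
    {f G : ℝ → ℝ} (h : ∀ T, RegSol N m a T f G)
    (hfast : Tendsto (fun r => f r * rho N r ^ m) atTop (nhds c)) :
    Tendsto (poh N m f G) atTop (nhds 0) := by
  have hb : ∀ᶠ r in atTop, f r * rho N r ^ m < c + 1 := hfast.eventually_lt_const (by linarith)
  obtain ⟨R, hR⟩ := eventually_atTop.1 (hb.and (eventually_ge_atTop 1))
  have hR1 : 1 ≤ R := (hR R le_rfl).2
  have hexp : ∀ r, R ≤ r → Real.exp r ≤ rho N r := fun r hr => exp_le_rho N (hR1.trans hr)
  have hone : ∀ r, R ≤ r → 1 ≤ rho N r := fun r hr =>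
    (Real.one_le_exp (by linarith [hR1.trans hr])).trans (hexp r hr)
  have hfρ : ∀ r, R ≤ r → rho N r * f r ≤ (c + 1) * Real.exp (-(m - 1) * r) := by
    intro r hr
    have h0 : 0 < rho N r := by linarith [hone r hr]
    have e1 : rho N r ^ m = rho N r * rho N r ^ (m - 1) := by
      rw [Real.rpow_sub_one h0.ne']; field_simp
    have e2 : Real.exp ((m - 1) * r) ≤ rho N r ^ (m - 1) := by
      rw [mul_comm, Real.exp_mul]
      exact Real.rpow_le_rpow (Real.exp_pos _).le (hexp r hr) (by linarith)
    have hr0 : 0 < r := by linarith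
    have hf := (h (r + 1)).fpos r ⟨hr0, by linarith⟩
    have h3 := (hR r hr).1
    rw [e1] at h3
    rw [neg_mul, Real.exp_neg, ← div_eq_mul_inv, le_div_iff₀ (Real.exp_pos _)]
    have := mul_le_mul_of_nonneg_left e2 (mul_nonneg h0.le hf.le)
    linarith
  have hw : ∃ C, 1 ≤ C ∧ ∀ r, R ≤ r → rho N r * G r ≤ C := by
    refine ⟨max 1 (rho N R * G R + (c + 1) / (m - 1) * Real.exp (-(m - 1) * R)), le_max_left _ _,
      fun r hr => le_trans ?_ (le_max_right _ _)⟩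
    have hm' : m - 1 ≠ 0 := by linarith
    have hmono := monotoneOn_Icc_of_hasDerivAt (a := R) (b := r)
      (x := fun r => -(c + 1) / (m - 1) * Real.exp (-(m - 1) * r) - rho N r * G r)
      (x' := fun r => (c + 1) * Real.exp (-(m - 1) * r) - rho N r * f r)
      (ContinuousOn.sub (by fun_prop) ((continuous_rho N).continuousOn.mul
        ((h 0).contG.mono fun x hx => (by linarith [hx.1] : (0 : ℝ) ≤ x))))
      (fun t ht => by
        have ht0 : 0 < t := by linarith [ht.1]
        have e : HasDerivAt (fun r : ℝ => Real.exp (-(m - 1) * r))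
          (Real.exp (-(m - 1) * t) * (-(m - 1) * 1)) t :=
          ((hasDerivAt_id t).const_mul (-(m - 1))).exp
        refine ((e.const_mul (-(c + 1) / (m - 1))).sub ((hasDerivAt_rho hN ht0).mul
          ((h (t + 1)).dG t ⟨ht0, by linarith⟩))).congr_deriv ?_
        field_simp
        ring)
      (fun t ht => by linarith [hfρ t ht.1.le])
      ⟨le_rfl, hr⟩ ⟨hr, le_rfl⟩ hr
    simp only at hmono
    have h5 : 0 ≤ (c + 1) / (m - 1) * Real.exp (-(m - 1) * r) :=
      mul_nonneg (div_nonneg (by linarith) (by linarith)) (Real.exp_pos _).le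
    have h6 : -(c + 1) / (m - 1) = -((c + 1) / (m - 1)) := by ring
    rw [h6] at hmono
    linarith
  obtain ⟨C, hC1, hC⟩ := hw
  set K := (c + 1) ^ 2 / 2 + C * (c + 1) / 2 + C ^ (m + 1) with hK
  have hbound : ∀ᶠ r in atTop, ‖poh N m f G r‖ ≤ K * (rho N r)⁻¹ := by
    filter_upwards [eventually_ge_atTop R] with r hr
    have hr0 : 0 < r := by linarith
    have hρ1 := hone r hr
    have h0 : 0 < rho N r := by linarith
    have hf := (h (r + 1)).fpos r ⟨hr0, by linarith⟩
    have hg := (h (r + 1)).Gpos r ⟨hr0, by linarith⟩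
    have hs := sInt_pos N hr0
    have hsρ := sInt_le_rho hN hr0.le
    have hfb : rho N r * f r ≤ c + 1 := by
      refine (hfρ r hr).trans ?_
      have : Real.exp (-(m - 1) * r) ≤ 1 := by
        rw [Real.exp_le_one_iff]; nlinarith
      nlinarith
    have hwb := hC r hr
    have hP : rho N r * (rho N r * G r ^ (m + 1)) ≤ C ^ (m + 1) := by
      have e1 : (rho N r * G r) ^ (m + 1) ≤ C ^ (m + 1) :=
        Real.rpow_le_rpow (by positivity) hwb (by linarith)
      rw [Real.mul_rpow h0.le hg.le] at e1
      have e2 : rho N r ^ (2 : ℝ) ≤ rho N r ^ (m + 1) :=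
        Real.rpow_le_rpow_of_exponent_le hρ1 (by linarith)
      rw [Real.rpow_two] at e2
      have := mul_le_mul_of_nonneg_right e2 (Real.rpow_nonneg hg.le (m + 1))
      nlinarith
    rw [← div_eq_mul_inv, le_div_iff₀ h0]
    have hPnn : 0 ≤ G r ^ (m + 1) := Real.rpow_nonneg hg.le _
    have t1 : rho N r * (sInt N r * f r ^ 2) ≤ (c + 1) ^ 2 := by
      have : sInt N r * f r ^ 2 ≤ rho N r * f r ^ 2 :=
        mul_le_mul_of_nonneg_right hsρ (sq_nonneg _)
      have h2 : (rho N r * f r) ^ 2 ≤ (c + 1) ^ 2 := pow_le_pow_left₀ (by positivity) hfb 2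
      nlinarith
    have t2 : rho N r * (rho N r * G r * f r) ≤ C * (c + 1) := by
      have := mul_le_mul hwb hfb (by positivity) (by linarith)
      linarith
    have t3 : rho N r * (sInt N r * G r ^ (m + 1) / (m + 1)) ≤ C ^ (m + 1) := by
      have a1 : sInt N r * G r ^ (m + 1) / (m + 1) ≤ sInt N r * G r ^ (m + 1) :=
        div_le_self (by positivity) (by linarith)
      have a2 : sInt N r * G r ^ (m + 1) ≤ rho N r * G r ^ (m + 1) :=
        mul_le_mul_of_nonneg_right hsρ hPnn
      exact (mul_le_mul_of_nonneg_left (a1.trans a2) h0.le).trans hP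
    have p1 : 0 ≤ rho N r * (sInt N r * f r ^ 2) := by positivity
    have p2 : 0 ≤ rho N r * (rho N r * G r * f r) := by positivity
    have p3 : 0 ≤ rho N r * (sInt N r * G r ^ (m + 1) / (m + 1)) := by
      have : 0 < m + 1 := by linarith
      positivity
    rw [Real.norm_eq_abs, ← abs_of_pos h0, ← abs_mul]
    have e : poh N m f G r * rho N r = rho N r * (sInt N r * f r ^ 2) / 2
        - rho N r * (rho N r * G r * f r) / 2
        + rho N r * (sInt N r * G r ^ (m + 1) / (m + 1)) := by
      unfold poh; ring
    rw [e, abs_le]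
    constructor <;> linarith
  refine squeeze_zero_norm' hbound ?_
  simpa using (tendsto_rho_atTop N).inv_tendsto_atTop.const_mul K

/-! ### Comparison with the fast-decaying solution -/

/-- If the Pohozaev functional of a positive solution vanishes at infinity, it increases from `0`
and then decreases to `0`. -/
theorem poh_nonneg_of_tendsto {N : ℕ} (hN : 2 ≤ N) {m a : ℝ} (hm : 1 < m)
    (hmN : m * ((N : ℝ) - 1) < N + 1) {f G : ℝ → ℝ} (h : ∀ T, RegSol N m a T f G)
    (hlim : Tendsto (poh N m f G) atTop (nhds 0)) : ∀ r, 0 ≤ r → 0 ≤ poh N m f G r := by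
  have hn2 : (2 : ℝ) ≤ N := by exact_mod_cast hN
  obtain ⟨r0, hr0, hz1, hz2⟩ := zFun_sign hN hm hmN
  have hcont := (h 0).cont_poh hm
  have hA : ∀ r, 0 < r → 0 ≤ G r ^ (m + 1) * ((r + ((N : ℝ) - 1)) / r) := by
    intro r hr
    have := (h (r + 1)).Gpos r ⟨hr, by linarith⟩
    exact mul_nonneg (Real.rpow_nonneg this.le _) (div_nonneg (by linarith) hr.le)
  have hd : ∀ r, 0 < r → HasDerivAt (poh N m f G)
      (G r ^ (m + 1) * ((r + ((N : ℝ) - 1)) / r) * zFun N m r) r := fun r hr =>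
    (h (r + 1)).deriv_poh hN hm ⟨hr, by linarith⟩
  intro r hr
  rcases le_or_gt r r0 with hle | hlt
  · have := monotoneOn_Icc_of_hasDerivAt (a := 0) (b := r0) (hcont.mono Icc_subset_Ici_self)
      (fun t ht => hd t ht.1) (fun t ht => mul_nonneg (hA t ht.1) (hz1 t ht).le)
      ⟨le_rfl, hr0.le⟩ ⟨hr, hle⟩ hr
    rwa [poh_zero hN] at this
  · refine le_of_tendsto hlim ?_
    filter_upwards [eventually_ge_atTop r] with R hR
    have := monotoneOn_Icc_of_hasDerivAt (a := r) (b := R) (x := fun t => - poh N m f G t)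
      ((hcont.mono fun x hx => hr.trans hx.1).neg)
      (fun t ht => (hd t (hr.trans_lt ht.1)).neg)
      (fun t ht => by
        have := mul_nonneg (hA t (hr.trans_lt ht.1)) (neg_nonneg.2 (hz2 t (hlt.trans ht.1)).le)
        linarith)
      ⟨le_rfl, hR⟩ ⟨hR, le_rfl⟩ hR
    simp only at this
    linarith

theorem hasDerivAt_quot {N : ℕ} {m a b T : ℝ} {f G U V : ℝ → ℝ} (hu : RegSol N m a T f G)
    (hU : RegSol N m b T U V) {r : ℝ} (hr : r ∈ Ioo 0 T) :
    HasDerivAt (fun r => G r / V r) ((f r * V r - G r * U r) / V r ^ 2) r := by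
  have hV := hU.Gpos r hr
  refine ((hu.dG r hr).div (hU.dG r hr) hV.ne').congr_deriv ?_
  congr 1
  ring

theorem strictMonoOn_quot {N : ℕ} {m a b T : ℝ} {f G U V : ℝ → ℝ} (hu : RegSol N m a T f G)
    (hU : RegSol N m b T U V) {x y : ℝ} (hx : 0 < x) (hy : y < T)
    (hK : ∀ r ∈ Ioo x y, 0 < f r * V r - G r * U r) :
    StrictMonoOn (fun r => G r / V r) (Icc x y) := by
  refine strictMonoOn_Icc_of_hasDerivAt
    (fun r hr => (hasDerivAt_quot hu hU
      ⟨hx.trans_le hr.1, hr.2.trans_lt hy⟩).continuousAt.continuousWithinAt)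
    (fun r hr => hasDerivAt_quot hu hU ⟨hx.trans hr.1, hr.2.trans hy⟩) ?_
  intro r hr
  have := hU.Gpos r ⟨hx.trans hr.1, hr.2.trans hy⟩
  exact div_pos (hK r hr) (by positivity)

/-- The Wronskian of a solution `(f, G)` and a solution `(U, V)` with larger initial value and
nonnegative Pohozaev functional is positive as long as `f > 0`; equivalently, `q = G / V` is
increasing. Otherwise, at a first critical point `r₁` the quotient `q` exceeds `1` (while `q < 1`
the Wronskian increases). Up to `r₁` the function `J_f - q^{m+1} J_U` is
nonincreasing, as `J_U ≥ 0`, so it is nonpositive at `r₁`; but at a critical point it equals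
`(q² - q^{m+1}) (s U - ρ V) U / 2 > 0`. -/
theorem wronskian_pos {N : ℕ} (hN : 2 ≤ N) {m a b T : ℝ} (hm : 1 < m) (hab : a < b)
    {f G U V : ℝ → ℝ} (hu : RegSol N m a T f G)
    (hU : RegSol N m b T U V) (hJ : ∀ r, 0 ≤ r → 0 ≤ poh N m U V r) :
    ∀ r ∈ Ioo 0 T, 0 < f r * V r - G r * U r := by
  intro r2 hr2
  by_contra! hneg
  -- the weighted Wronskian; the factor `ρ` cancels the damping terms in its derivative
  set K : ℝ → ℝ := fun r => rho N r * (f r * V r - G r * U r) with hKdef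
  have hKc : ContinuousOn K (Ici 0) := (continuous_rho N).continuousOn.mul
    ((hu.contf.mul hU.contG).sub (hu.contG.mul hU.contf))
  have hK0 : K 0 = 0 := by simp [hKdef, rho_zero hN]
  have hKd : ∀ r ∈ Ioo 0 T, HasDerivAt K (rho N r * (G r * V r ^ m - G r ^ m * V r)) r := by
    intro r hr
    refine ((hasDerivAt_rho hN hr.1).mul (((hu.df r hr).mul (hU.dG r hr)).sub
      ((hu.dG r hr).mul (hU.df r hr)))).congr_deriv ?_
    simp only [Pi.mul_apply, Pi.sub_apply]
    ring
  have hK'pos : ∀ r ∈ Ioo 0 T, G r < V r → 0 < rho N r * (G r * V r ^ m - G r ^ m * V r) := by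
    intro r hr hlt
    have hG := hu.Gpos r hr
    have hV := hU.Gpos r hr
    have e1 : V r ^ m = V r ^ (m - 1) * V r := by
      rw [Real.rpow_sub_one hV.ne']; field_simp
    have e2 : G r ^ m = G r ^ (m - 1) * G r := by
      rw [Real.rpow_sub_one hG.ne']; field_simp
    have e3 : G r ^ (m - 1) < V r ^ (m - 1) := Real.rpow_lt_rpow hG.le hlt (by linarith)
    have e4 : G r * V r ^ m - G r ^ m * V r = G r * V r * (V r ^ (m - 1) - G r ^ (m - 1)) := by
      rw [e1, e2]; ring
    rw [e4]
    exact mul_pos (rho_pos N hr.1) (mul_pos (mul_pos hG hV) (by linarith))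
  -- near the origin `f < U`, hence `G < V` and the Wronskian is positive
  obtain ⟨ε, hε, hfU⟩ : ∃ ε > 0, ∀ r ∈ Ico 0 ε, f r < U r := by
    have : ContinuousWithinAt (fun r => U r - f r) (Ici 0) 0 :=
      (hU.contf 0 (mem_Ici.2 le_rfl)).sub (hu.contf 0 (mem_Ici.2 le_rfl))
    have h1 : ∀ᶠ r in nhdsWithin 0 (Ici 0), 0 < U r - f r := by
      refine this.eventually_const_lt ?_
      change 0 < U 0 - f 0
      rw [hU.f0, hu.f0]; linarith
    obtain ⟨ε, hε, h2⟩ := mem_nhdsGE_iff_exists_Ico_subset.1 h1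
    refine ⟨ε, hε, fun r hr => ?_⟩
    have : 0 < U r - f r := h2 hr
    linarith
  have hGV : ∀ r ∈ Ioo 0 T, r < ε → G r < V r := by
    intro r hr hrε
    have := strictMonoOn_Icc_of_hasDerivAt (a := 0) (b := r)
      (x := fun r => rho N r * (V r - G r)) (x' := fun r => rho N r * (U r - f r))
      ((continuous_rho N).continuousOn.mul
        ((hU.contG.sub hu.contG).mono Icc_subset_Ici_self))
      (fun t ht => by
        have ht' : t ∈ Ioo 0 T := ⟨ht.1, ht.2.trans hr.2⟩
        refine ((hasDerivAt_rho hN ht.1).mul ((hU.dG t ht').sub (hu.dG t ht'))).congr_deriv ?_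
        simp only [Pi.sub_apply]
        ring)
      (fun t ht => mul_pos (rho_pos N ht.1)
        (sub_pos.2 (hfU t ⟨ht.1.le, ht.2.trans hrε⟩)))
      ⟨le_rfl, hr.1.le⟩ ⟨hr.1.le, le_rfl⟩ hr.1
    simp only [rho_zero hN, zero_mul] at this
    have := pos_of_mul_pos_right this (rho_pos N hr.1).le
    linarith
  have hKnear : ∀ r ∈ Ioo 0 T, r < ε → 0 < K r := by
    intro r hr hrε
    have := strictMonoOn_Icc_of_hasDerivAt (a := 0) (b := r) (hKc.mono Icc_subset_Ici_self)
      (fun t ht => hKd t ⟨ht.1, ht.2.trans hr.2⟩)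
      (fun t ht => hK'pos t ⟨ht.1, ht.2.trans hr.2⟩
        (hGV t ⟨ht.1, ht.2.trans hr.2⟩ (ht.2.trans hrε)))
      ⟨le_rfl, hr.1.le⟩ ⟨hr.1.le, le_rfl⟩ hr.1
    rwa [hK0] at this
  set δ := min (ε / 2) (r2 / 2) with hδ
  have hr20 := hr2.1
  have hδ0 : 0 < δ := by rw [hδ]; positivity
  have hδε : δ < ε := (min_le_left _ _).trans_lt (by linarith)
  have hδr2 : δ < r2 := (min_le_right _ _).trans_lt (by linarith)
  obtain ⟨r1, hr1, hKr1, hKpos⟩ := exists_first_zero (φ := K) hδr2.le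
    (hKc.mono fun x hx => hδ0.le.trans hx.1) (hKnear δ ⟨hδ0, hδr2.trans hr2.2⟩ hδε)
    (mul_nonpos_of_nonneg_of_nonpos (rho_pos N hr20).le hneg)
  have hr10 : 0 < r1 := hδ0.trans hr1.1
  have hr1T : r1 < T := hr1.2.trans_lt hr2.2
  have hr1I : r1 ∈ Ioo 0 T := ⟨hr10, hr1T⟩
  have hKpos' : ∀ r ∈ Ioo 0 r1, 0 < K r := by
    intro r hr
    rcases le_or_gt δ r with h | h
    · exact hKpos r ⟨h, hr.2⟩
    · exact hKnear r ⟨hr.1, hr.2.trans hr1T⟩ (h.trans hδε)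
  have hWpos : ∀ r ∈ Ioo 0 r1, 0 < f r * V r - G r * U r := fun r hr =>
    pos_of_mul_pos_right (hKpos' r hr) (rho_pos N hr.1).le
  have hW1 : f r1 * V r1 - G r1 * U r1 = 0 := by
    rcases mul_eq_zero.1 hKr1 with h | h
    · exact absurd h (rho_pos N hr10).ne'
    · exact h
  have hV1 := hU.Gpos r1 hr1I
  have hU1 := hU.fpos r1 hr1I
  have hG1 := hu.Gpos r1 hr1I
  set q : ℝ → ℝ := fun r => G r / V r with hq
  have hqmono : ∀ x ∈ Ioo 0 r1, q x < q r1 := fun x hx =>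
    strictMonoOn_quot hu hU hx.1 hr1T (fun r hr => hWpos r ⟨hx.1.trans hr.1, hr.2⟩)
      ⟨le_rfl, hx.2.le⟩ ⟨hx.2.le, le_rfl⟩ hx.2
  have hq1 : 1 < q r1 := by
    by_contra! hle
    have := strictMonoOn_Icc_of_hasDerivAt (a := 0) (b := r1) (hKc.mono Icc_subset_Ici_self)
      (fun t ht => hKd t ⟨ht.1, ht.2.trans hr1T⟩)
      (fun t ht => by
        have ht' : t ∈ Ioo 0 T := ⟨ht.1, ht.2.trans hr1T⟩
        refine hK'pos t ht' ?_
        have h1 := (hqmono t ht).trans_le hle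
        rwa [hq, div_lt_one (hU.Gpos t ht')] at h1)
      ⟨le_rfl, hr10.le⟩ ⟨hr10.le, le_rfl⟩ hr10
    rw [hK0, hKr1] at this
    exact lt_irrefl _ this
  set P : ℝ → ℝ := fun r => poh N m f G r - q r ^ (m + 1) * poh N m U V r with hP
  have hPd : ∀ r ∈ Ioo 0 T, HasDerivAt P
      (-((f r * V r - G r * U r) / V r ^ 2 * (m + 1) * q r ^ (m + 1 - 1) * poh N m U V r)) r := by
    intro r hr
    have hV := hU.Gpos r hr
    have hG := hu.Gpos r hr
    have hqp : 0 < q r := div_pos hG hV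
    refine ((hu.deriv_poh hN hm hr).sub (((hasDerivAt_quot hu hU hr).rpow_const
      (Or.inl hqp.ne')).mul (hU.deriv_poh hN hm hr))).congr_deriv ?_
    have e : q r ^ (m + 1) * V r ^ (m + 1) = G r ^ (m + 1) := by
      rw [← Real.mul_rpow hqp.le hV.le]; congr 1; simp only [hq]; field_simp
    have e2 : (G r / V r) ^ (m + 1) = q r ^ (m + 1) := rfl
    have e3 : (G r / V r) ^ (m + 1 - 1) = q r ^ (m + 1 - 1) := rfl
    rw [e2, e3, ← e]
    ring
  have hPle : ∀ x ∈ Ioo 0 r1, P r1 ≤ poh N m f G x := by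
    intro x hx
    have h1 := monotoneOn_Icc_of_hasDerivAt (a := x) (b := r1) (x := fun t => - P t)
      (fun t ht => (hPd t ⟨hx.1.trans_le ht.1, ht.2.trans_lt hr1T⟩).neg.continuousAt.continuousWithinAt)
      (fun t ht => (hPd t ⟨hx.1.trans ht.1, ht.2.trans hr1T⟩).neg)
      (fun t ht => by
        have ht' : t ∈ Ioo 0 T := ⟨hx.1.trans ht.1, ht.2.trans hr1T⟩
        have a1 := hWpos t ⟨hx.1.trans ht.1, ht.2⟩
        have a2 := hJ t ht'.1.le
        have a3 : 0 ≤ q t := (div_pos (hu.Gpos t ht') (hU.Gpos t ht')).le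
        have a4 := Real.rpow_nonneg a3 (m + 1 - 1)
        have a5 := hU.Gpos t ht'
        have a6 : 0 < m + 1 := by linarith
        rw [neg_neg]
        positivity)
      ⟨le_rfl, hx.2.le⟩ ⟨hx.2.le, le_rfl⟩ hx.2.le
    simp only at h1
    have hx' : x ∈ Ioo 0 T := ⟨hx.1, hx.2.trans hr1T⟩
    have h2 : 0 ≤ q x ^ (m + 1) * poh N m U V x := mul_nonneg
      (Real.rpow_nonneg (div_pos (hu.Gpos x hx') (hU.Gpos x hx')).le _) (hJ x hx.1.le)
    have h3 : P x = poh N m f G x - q x ^ (m + 1) * poh N m U V x := rfl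
    linarith
  have hPnonpos : P r1 ≤ 0 := by
    have h1 : Tendsto (poh N m f G) (nhdsWithin 0 (Ioi 0)) (nhds 0) := by
      have := (hu.cont_poh hm) 0 (mem_Ici.2 le_rfl)
      rw [ContinuousWithinAt, poh_zero hN] at this
      exact this.mono_left (nhdsWithin_mono _ Ioi_subset_Ici_self)
    refine ge_of_tendsto h1 ?_
    filter_upwards [Ioo_mem_nhdsGT hr10] with x hx using hPle x hx
  have hsU : sInt N r1 * U r1 < rho N r1 * V r1 := by
    have h1 := strictMonoOn_Icc_of_hasDerivAt (a := 0) (b := r1)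
      (x := fun r => rho N r * V r - sInt N r * U r) (x' := fun r => sInt N r * V r ^ m)
      (((continuous_rho N).continuousOn.mul (hU.contG.mono Icc_subset_Ici_self)).sub
        ((continuous_sInt N).continuousOn.mul (hU.contf.mono Icc_subset_Ici_self)))
      (fun t ht => by
        have ht' : t ∈ Ioo 0 T := ⟨ht.1, ht.2.trans hr1T⟩
        refine (((hasDerivAt_rho hN ht.1).mul (hU.dG t ht')).sub
          ((hasDerivAt_sInt N t).mul (hU.df t ht'))).congr_deriv ?_
        ring)
      (fun t ht => mul_pos (sInt_pos N ht.1)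
        (Real.rpow_pos_of_pos (hU.Gpos t ⟨ht.1, ht.2.trans hr1T⟩) _))
      ⟨le_rfl, hr10.le⟩ ⟨hr10.le, le_rfl⟩ hr10
    simp only [rho_zero hN, sInt_zero, zero_mul, sub_zero] at h1
    linarith
  have hPval : P r1 = (q r1 ^ (m + 1) - q r1 ^ 2) * ((rho N r1 * V r1 - sInt N r1 * U r1) * U r1 / 2) := by
    have hqp : 0 < q r1 := div_pos hG1 hV1
    have eG : G r1 = q r1 * V r1 := by simp only [hq]; field_simp
    have ef : f r1 = q r1 * U r1 := by
      have : f r1 * V r1 = q r1 * U r1 * V r1 := by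
        rw [eG] at hW1; linarith
      exact mul_right_cancel₀ hV1.ne' this
    have e1 : G r1 ^ (m + 1) = q r1 ^ (m + 1) * V r1 ^ (m + 1) := by
      rw [← Real.mul_rpow hqp.le hV1.le, ← eG]
    have e2 : P r1 = poh N m f G r1 - q r1 ^ (m + 1) * poh N m U V r1 := rfl
    rw [e2]
    unfold poh
    rw [e1, ef]
    generalize q r1 ^ (m + 1) = Q at *
    rw [eG]
    ring
  have hqq : q r1 ^ 2 < q r1 ^ (m + 1) := by
    rw [← Real.rpow_two]
    exact Real.rpow_lt_rpow_of_exponent_lt hq1 (by linarith)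
  have : 0 < P r1 := by
    rw [hPval]
    exact mul_pos (by linarith) (div_pos (mul_pos (by linarith) hU1) (by norm_num))
  linarith

/-- A solution starting below a positive one with nonnegative Pohozaev functional never vanishes:
as long as it is positive, `f ≥ (G / V) U` with `G / V` increasing. -/
theorem profile_pos {N : ℕ} (hN : 2 ≤ N) {p a b : ℝ} (hp1 : 1 < p) (hp2 : p < 2) (ha : 0 < a)
    (hab : a < b) {f f' F' U V : ℝ → ℝ} (hf : IsProfileSol N p a f f' F')
    (hU : ∀ T, RegSol N (1 / (p - 1)) b T U V)
    (hJ : ∀ r, 0 ≤ r → 0 ≤ poh N (1 / (p - 1)) U V r) : ∀ r, 0 ≤ r → 0 < f r := by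
  have hm : 1 < 1 / (p - 1) := by rw [lt_div_iff₀] <;> linarith
  intro R hR
  by_contra! hneg
  have hc : ContinuousOn f (Ici 0) := fun r hr => (hf.1 r hr).continuousWithinAt
  have hf0 : f 0 = a := hf.2.2.2.2.2.1
  obtain ⟨T, hT, hT0, hTpos⟩ := exists_first_zero hR (hc.mono Icc_subset_Ici_self)
    (by rw [hf0]; exact ha) hneg
  have hTp := hT.1
  have hu := regSol_of_profile hN hp1 hf hTpos
  have hW := wronskian_pos hN hm hab hu (hU T) hJ
  have hx : T / 2 ∈ Ioo 0 T := ⟨by linarith, by linarith⟩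
  set q := gFun p f' (T / 2) / V (T / 2) with hq
  have hqp : 0 < q := div_pos (hu.Gpos _ hx) ((hU T).Gpos _ hx)
  have hlow : ∀ r ∈ Ioo (T / 2) T, q * U r ≤ f r := by
    intro r hr
    have hr' : r ∈ Ioo 0 T := ⟨hx.1.trans hr.1, hr.2⟩
    have hV := (hU T).Gpos r hr'
    have h1 := strictMonoOn_quot hu (hU T) hx.1 hr.2
      (fun t ht => hW t ⟨hx.1.trans ht.1, ht.2.trans hr.2⟩)
      ⟨le_rfl, hr.1.le⟩ ⟨hr.1.le, le_rfl⟩ hr.1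
    simp only [← hq] at h1
    rw [lt_div_iff₀ hV] at h1
    have h2 := hW r hr'
    have hUr := (hU T).fpos r hr'
    have h3 : q * U r * V r ≤ f r * V r := by nlinarith
    exact le_of_mul_le_mul_right h3 hV
  have hUT := (hU (T + 1)).fpos T ⟨hTp, by linarith⟩
  have hcd : Tendsto (fun r => f r - q * U r) (nhdsWithin T (Iio T)) (nhds (f T - q * U T)) := by
    have : ContinuousAt (fun r => f r - q * U r) T :=
      (((hc T hTp.le).continuousAt (Ici_mem_nhds hTp)).sub
        ((((hU T).contf T hTp.le).continuousAt (Ici_mem_nhds hTp)).const_mul q))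
    exact this.tendsto.mono_left nhdsWithin_le_nhds
  have : 0 ≤ f T - q * U T := by
    refine ge_of_tendsto hcd ?_
    filter_upwards [Ioo_mem_nhdsLT hx.2] with r hr
    linarith [hlow r hr]
  nlinarith [mul_pos hqp hUT]

/-- If `q = G / V` is increasing, then comparing the weights `q^{m+1}` with their value at the point
where the Pohozaev integrand changes sign gives `J_f ≤ q(r₀)^{m+1} J_U - δ` for `r ≥ r₀` and some `δ > 0`, and `J_U → 0`. -/
theorem poh_eventually_neg {N : ℕ} (hN : 2 ≤ N) {m a b : ℝ} (hm : 1 < m)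
    (hmN : m * ((N : ℝ) - 1) < N + 1) {f G U V : ℝ → ℝ} (hu : ∀ T, RegSol N m a T f G)
    (hU : ∀ T, RegSol N m b T U V) (hlim : Tendsto (poh N m U V) atTop (nhds 0))
    (hW : ∀ r, 0 < r → 0 < f r * V r - G r * U r) : ∀ᶠ r in atTop, poh N m f G r < 0 := by
  have hn2 : (2 : ℝ) ≤ N := by exact_mod_cast hN
  obtain ⟨r0, hr0, hz1, hz2⟩ := zFun_sign hN hm hmN
  have hq : ∀ x y, 0 < x → x < y → G x / V x < G y / V y := fun x y hx hxy =>
    strictMonoOn_quot (hu (y + 1)) (hU (y + 1)) hx (by linarith)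
      (fun t ht => hW t (hx.trans ht.1)) ⟨le_rfl, hxy.le⟩ ⟨hxy.le, le_rfl⟩ hxy
  have hGp : ∀ r, 0 < r → 0 < G r := fun r hr => (hu (r + 1)).Gpos r ⟨hr, by linarith⟩
  have hVp : ∀ r, 0 < r → 0 < V r := fun r hr => (hU (r + 1)).Gpos r ⟨hr, by linarith⟩
  set q := G r0 / V r0 with hqd
  have hqp : 0 < q := div_pos (hGp r0 hr0) (hVp r0 hr0)
  set D : ℝ → ℝ := fun r => q ^ (m + 1) * poh N m U V r - poh N m f G r with hD
  have hDc : ContinuousOn D (Ici 0) :=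
    (continuousOn_const.mul ((hU 0).cont_poh hm)).sub ((hu 0).cont_poh hm)
  have hDd : ∀ r, 0 < r → HasDerivAt D
      (((q * V r) ^ (m + 1) - G r ^ (m + 1)) * ((r + ((N : ℝ) - 1)) / r) * zFun N m r) r := by
    intro r hr
    have hr' : r ∈ Ioo 0 (r + 1) := ⟨hr, by linarith⟩
    refine ((((hU (r + 1)).deriv_poh hN hm hr').const_mul _).sub
      ((hu (r + 1)).deriv_poh hN hm hr')).congr_deriv ?_
    rw [Real.mul_rpow hqp.le (hVp r hr).le]
    ring
  have hA : ∀ r : ℝ, 0 < r → 0 < (r + ((N : ℝ) - 1)) / r := fun r hr => div_pos (by linarith) hr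
  have hD0 : 0 < D r0 := by
    have := strictMonoOn_Icc_of_hasDerivAt (a := 0) (b := r0) (hDc.mono Icc_subset_Ici_self)
      (fun t ht => hDd t ht.1)
      (fun t ht => by
        have h1 := hq t r0 ht.1 ht.2
        rw [div_lt_iff₀ (hVp t ht.1)] at h1
        have h2 := Real.rpow_lt_rpow (hGp t ht.1).le h1 (by linarith : 0 < m + 1)
        exact mul_pos (mul_pos (by linarith) (hA t ht.1)) (hz1 t ht))
      ⟨le_rfl, hr0.le⟩ ⟨hr0.le, le_rfl⟩ hr0
    simpa [hD, poh_zero hN] using this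
  have hDr : ∀ r, r0 ≤ r → D r0 ≤ D r := by
    intro r hr
    refine monotoneOn_Icc_of_hasDerivAt (a := r0) (b := r)
      (hDc.mono fun x hx => hr0.le.trans hx.1) (fun t ht => hDd t (hr0.trans ht.1))
      (fun t ht => ?_) ⟨le_rfl, hr⟩ ⟨hr, le_rfl⟩ hr
    have ht0 := hr0.trans ht.1
    have h1 := hq r0 t hr0 ht.1
    rw [lt_div_iff₀ (hVp t ht0)] at h1
    have h2 := Real.rpow_lt_rpow (mul_pos hqp (hVp t ht0)).le h1 (by linarith : 0 < m + 1)
    refine mul_nonneg_of_nonpos_of_nonpos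
      (mul_nonpos_of_nonpos_of_nonneg (by linarith) (hA t ht0).le) (hz2 t ht.1).le
  have hlim' : Tendsto (fun r => q ^ (m + 1) * poh N m U V r) atTop (nhds 0) := by
    simpa using hlim.const_mul (q ^ (m + 1))
  filter_upwards [hlim'.eventually_lt_const hD0, eventually_ge_atTop r0] with r h1 h2
  have h3 := hDr r h2
  have h4 : D r = q ^ (m + 1) * poh N m U V r - poh N m f G r := rfl
  linarith

/-! ### Slow decay -/

/-- Negativity of the Pohozaev functional forces slow decay. With `k = G^m / f = -f' / f` it gives
`f / G + 2 k / (m + 1) < ρ / s → 1`, whence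
`k' ≤ k (m (ρ / s - 1) - (m - 1) / (m + 1) k)` and `k → 0`. Then `G / f → 1`, so that
`(f^{1-m})' = (m - 1) (G / f)^m → m - 1`. -/
theorem slow_decay_of_poh_neg {N : ℕ} (hN : 2 ≤ N) {m a : ℝ} (hm : 1 < m) {f G : ℝ → ℝ}
    (hu : ∀ T, RegSol N m a T f G) (hneg : ∀ᶠ r in atTop, poh N m f G r < 0) :
    Tendsto (fun r => ((m - 1) * r) ^ (1 / (m - 1)) * f r) atTop (nhds 1) := by
  have hn2 : (2 : ℝ) ≤ N := by exact_mod_cast hN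
  have hG : ∀ r, 0 < r → 0 < G r := fun r hr => (hu (r + 1)).Gpos r ⟨hr, by linarith⟩
  have hf : ∀ r, 0 < r → 0 < f r := fun r hr => (hu (r + 1)).fpos r ⟨hr, by linarith⟩
  have hdG : ∀ r, 0 < r → HasDerivAt G (f r - (1 + ((N : ℝ) - 1) / r) * G r) r :=
    fun r hr => (hu (r + 1)).dG r ⟨hr, by linarith⟩
  have hdf : ∀ r, 0 < r → HasDerivAt f (-(G r ^ m)) r :=
    fun r hr => (hu (r + 1)).df r ⟨hr, by linarith⟩
  have hdk : ∀ r, 0 < r → HasDerivAt (fun r => G r ^ m / f r)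
      (G r ^ m / f r * (m * (f r / G r) - m * (1 + ((N : ℝ) - 1) / r) + G r ^ m / f r)) r := by
    intro r hr
    have hg := hG r hr
    have hfr := hf r hr
    refine (((hdG r hr).rpow_const (p := m) (Or.inl hg.ne')).div (hdf r hr)
      hfr.ne').congr_deriv ?_
    rw [Real.rpow_sub_one hg.ne']
    field_simp
    ring
  have hk : Tendsto (fun r => G r ^ m / f r) atTop (nhds 0) := by
    rw [Metric.tendsto_atTop']
    intro η hη
    have hc : 0 < (m - 1) / (m + 1) := div_pos (by linarith) (by linarith)
    set c := (m - 1) / (m + 1) with hcd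
    have hy : ∀ᶠ r in atTop, m * (rho N r / sInt N r - 1) < c * η / 2 := by
      have : Tendsto (fun r => m * (rho N r / sInt N r - 1)) atTop (nhds (m * (1 - 1))) :=
        ((tendsto_rho_div_sInt hN).sub_const 1).const_mul m
      exact this.eventually_lt_const (by rw [sub_self, mul_zero]; positivity)
    obtain ⟨R, hR⟩ := eventually_atTop.1 ((hneg.and hy).and (eventually_gt_atTop 0))
    have hev : ∀ᶠ r in atTop, G r ^ m / f r < η := by
      refine eventually_lt_of_deriv_le (R := R) (β := c * η ^ 2 / 2) (by positivity)
        (fun r hr => hdk r (hR r hr).2) ?_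
      intro r hr hge
      obtain ⟨⟨hJ, hyr⟩, hr0⟩ := hR r hr
      have hg := hG r hr0
      have hfr := hf r hr0
      have hs := sInt_pos N hr0
      have hm1 : 0 < m + 1 := by linarith
      set k := G r ^ m / f r with hkd
      have hkf : G r ^ m = k * f r := by rw [hkd]; field_simp
      have hkey : f r / G r + 2 * k / (m + 1) < rho N r / sInt N r := by
        have e : f r / G r + 2 * k / (m + 1) - rho N r / sInt N r
            = 2 * poh N m f G r / (sInt N r * f r * G r) := by
          unfold poh
          rw [Real.rpow_add hg, Real.rpow_one, hkf]
          field_simp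
          ring
        have : 2 * poh N m f G r / (sInt N r * f r * G r) < 0 :=
          div_neg_of_neg_of_pos (by linarith) (by positivity)
        linarith
      have hn0 : 0 ≤ m * (((N : ℝ) - 1) / r) :=
        mul_nonneg (by linarith) (div_nonneg (by linarith) hr0.le)
      have hck : c * k = m * (2 * k / (m + 1)) - k := by
        rw [hcd]; field_simp; ring
      have h1 := mul_lt_mul_of_pos_left hkey (by linarith : 0 < m)
      have hcg := mul_le_mul_of_nonneg_left hge hc.le
      have h2 : m * (f r / G r) - m * (1 + ((N : ℝ) - 1) / r) + k ≤ -(c * η / 2) := by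
        linarith
      have h3 := mul_le_mul_of_nonneg_left h2 (hη.le.trans hge)
      have h4 := mul_le_mul_of_nonneg_right hge (by positivity : 0 ≤ c * η / 2)
      nlinarith
    obtain ⟨S, hS⟩ := eventually_atTop.1 (hev.and (eventually_gt_atTop 0))
    refine ⟨S, fun r hr => ?_⟩
    have hr0 := (hS r hr.le).2
    have := div_pos (Real.rpow_pos_of_pos (hG r hr0) m) (hf r hr0)
    rw [Real.dist_eq, sub_zero, abs_of_pos this]
    exact (hS r hr.le).1
  have hh : Tendsto (fun r => G r / f r) atTop (nhds 1) := by
    refine tendsto_one_of_linear_ode (R := 0)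
      (b := fun r => 1 + ((N : ℝ) - 1) / r - G r ^ m / f r) ?_ ?_
    · intro r hr
      have hfr := hf r hr
      refine ((hdG r hr).div (hdf r hr) hfr.ne').congr_deriv ?_
      field_simp
      ring
    · have : Tendsto (fun r : ℝ => ((N : ℝ) - 1) / r) atTop (nhds 0) :=
        tendsto_const_nhds.div_atTop tendsto_id
      simpa using (this.const_add 1).sub hk
  have hX : Tendsto (fun r => f r ^ (1 - m) / r) atTop (nhds (m - 1)) := by
    refine tendsto_div_id_of_deriv (R := 0) (X' := fun r => (m - 1) * (G r / f r) ^ m) ?_ ?_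
    · intro r hr
      have hfr := hf r hr
      refine ((hdf r hr).rpow_const (p := 1 - m) (Or.inl hfr.ne')).congr_deriv ?_
      rw [Real.div_rpow (hG r hr).le hfr.le, show 1 - m - 1 = -m by ring, Real.rpow_neg hfr.le]
      field_simp
      ring
    · have := (hh.rpow_const (p := m) (Or.inl one_ne_zero)).const_mul (m - 1)
      simpa using this
  have hμ : 0 < m - 1 := by linarith
  have hY : Tendsto (fun r => ((m - 1) / (f r ^ (1 - m) / r)) ^ (1 / (m - 1))) atTop (nhds 1) := by
    have h1 : Tendsto (fun r => (m - 1) / (f r ^ (1 - m) / r)) atTop (nhds ((m - 1) / (m - 1))) :=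
      tendsto_const_nhds.div hX hμ.ne'
    rw [div_self hμ.ne'] at h1
    simpa using h1.rpow_const (p := 1 / (m - 1)) (Or.inl one_ne_zero)
  refine hY.congr' ?_
  filter_upwards [eventually_gt_atTop 0] with r hr
  have hfr := hf r hr
  have hX0 : 0 < f r ^ (1 - m) := Real.rpow_pos_of_pos hfr _
  have e1 : (m - 1) / (f r ^ (1 - m) / r) = (m - 1) * r / f r ^ (1 - m) := by field_simp
  have e2 : (f r ^ (1 - m)) ^ (1 / (m - 1)) = (f r)⁻¹ := by
    rw [← Real.rpow_mul hfr.le, ← Real.rpow_neg_one]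
    congr 1
    field_simp
    ring
  rw [e1, Real.div_rpow (by positivity) hX0.le, e2, div_inv_eq_mul]

/-! ### The profiles below `a_*` -/

/-- for `a ∈ (0, a_*)` the profile is positive and
`((2-p)r/(p-1))^{(p-1)/(2-p)} f(r;a) → 1` as `r → ∞`. -/
theorem stmt2 (N : ℕ) (hN : 2 ≤ N) (p : ℝ)
    (hp1 : 2 * (N : ℝ) / ((N : ℝ) + 1) < p) (hp2 : p < 2)
    (astar : ℝ) (hastar : 0 < astar) (hdecay : HasFastDecay N p astar)
    (a : ℝ) (ha : 0 < a) (haa : a < astar)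
    (f f' F' : ℝ → ℝ) (hf : IsProfileSol N p a f f' F') :
    (∀ r, 0 ≤ r → 0 < f r) ∧
    Filter.Tendsto (fun r => ((2 - p) * r / (p - 1)) ^ ((p - 1) / (2 - p)) * f r)
      Filter.atTop (nhds 1) := by
  have hn2 : (2 : ℝ) ≤ N := by exact_mod_cast hN
  rw [div_lt_iff₀ (by linarith)] at hp1
  have hp : 1 < p := by nlinarith
  have hp0 : 0 < p - 1 := by linarith
  have hm : 1 < 1 / (p - 1) := by rw [lt_div_iff₀] <;> linarith
  have hmN : 1 / (p - 1) * ((N : ℝ) - 1) < N + 1 := by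
    rw [one_div_mul_eq_div, div_lt_iff₀ hp0]; nlinarith
  obtain ⟨U, U', W', hUsol, hUpos, c, hc, hUlim⟩ := hdecay
  have hU : ∀ T, RegSol N (1 / (p - 1)) astar T U (gFun p U') := fun T =>
    regSol_of_profile hN hp hUsol fun r hr => hUpos r hr.1
  have hfast : Tendsto (fun r => U r * rho N r ^ (1 / (p - 1))) atTop (nhds c) := by
    refine hUlim.congr' ?_
    filter_upwards [eventually_gt_atTop 0] with r hr
    have e1 : (((N - 1 : ℕ) : ℝ)) = (N : ℝ) - 1 := by
      rw [Nat.cast_sub (by omega), Nat.cast_one]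
    unfold rho
    rw [Real.mul_rpow (by positivity) (Real.exp_pos _).le, ← Real.exp_mul, ← Real.rpow_natCast,
      ← Real.rpow_mul hr.le, e1, mul_one_div, mul_one_div, mul_assoc]
  have hlim := tendsto_poh_of_fast hN hm hc hU hfast
  have hJ := poh_nonneg_of_tendsto hN hm hmN hU hlim
  have hpos := profile_pos hN hp hp2 ha haa hf hU hJ
  refine ⟨hpos, ?_⟩
  have hu : ∀ T, RegSol N (1 / (p - 1)) a T f (gFun p f') := fun T =>
    regSol_of_profile hN hp hf fun r hr => hpos r hr.1
  have hneg := poh_eventually_neg hN hm hmN hu hU hlim fun r hr =>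
    wronskian_pos hN hm haa (hu (r + 1)) (hU (r + 1)) hJ r ⟨hr, by linarith⟩
  have := slow_decay_of_poh_neg hN hm hu hneg
  have hp2' : 0 < 2 - p := by linarith
  have e : 1 / (p - 1) - 1 = (2 - p) / (p - 1) := by field_simp; ring
  rw [e, one_div_div] at this
  refine this.congr fun r => ?_
  rw [div_mul_eq_mul_div]
end

section
/- There exists a_∞ > 0 such that for every a > a_∞ the solution f(·;a) of the profile equation vanishes at some finite radius: there exists R ∈ (0,∞) with f(R;a) = 0. -/
/-!
If `f` never vanishes it is positive on `[0, ∞)`. Then the flux `g = -|f'|^{p-2} f'` is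
nonnegative (`flux_nonneg`), so `f' = -g ^ m` with `m = 1 / (p - 1) > 1`, and the weighted flux
`w = r^{N-1} e^r g` satisfies `w' = r^{N-1} e^r f`; in particular `f` decreases and `w` increases.
It suffices to bound `a = f 0`, and this follows from two opposite estimates on `[0, 1]`.

*Bounds independent of `a`.* Monotonicity of `f` gives `w ≥ f r^N / N`, hence
`f' ≤ -(c r f) ^ m` on `[0, 1]`. As `m > 1`, integration bounds `f (1/2)` independently of `a`
(`PosSystem.upper_half`). Since `f` must remain positive across `[1/2, 1]`, where `g` is at least
`w (1/2) / 3`, the value `w (1/2)` is bounded as well (`PosSystem.weighted_half_le`).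

*Growth in `a`.* As `g ≤ a r`, one has `f ≥ a / 2` up to a radius comparable to
`a^{-(m-1)/(m+1)}`, so that `w (1/2)` is at least a constant times
`a^{1 - N (m-1)/(m+1)}` (`PosSystem.weighted_half_lower`). The exponent is positive exactly when
`p > 2N/(N+1)`, and therefore `a` is bounded (`exists_bound`).
-/

open Real Set Filter MeasureTheory

/-! ### The first-order system of a positive profile -/

lemma le_of_hasDerivAt_nonneg {u u' : ℝ → ℝ} {x y : ℝ} (hxy : x ≤ y)
    (hc : ContinuousOn u (Ici 0)) (hx : 0 ≤ x)
    (hd : ∀ t ∈ Ioo x y, HasDerivAt u (u' t) t) (h : ∀ t ∈ Ioo x y, 0 ≤ u' t) :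
    u x ≤ u y := by
  have hm : MonotoneOn u (Icc x y) := by
    apply monotoneOn_of_deriv_nonneg (convex_Icc x y)
      (hc.mono fun t ht => hx.trans ht.1)
    · intro t ht
      rw [interior_Icc] at ht
      exact (hd t ht).differentiableAt.differentiableWithinAt
    · intro t ht
      rw [interior_Icc] at ht
      rw [(hd t ht).deriv]
      exact h t ht
  exact hm (left_mem_Icc.2 hxy) (right_mem_Icc.2 hxy) hxy

/-- A positive profile, written as a first-order system for `f` and the flux
`g = -|f'|^{p-2} f' ≥ 0`. Here `k = N - 1` and `m = 1 / (p - 1)`, so that `f' = -g ^ m`. -/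
structure PosSystem (k : ℕ) (m a : ℝ) (f g : ℝ → ℝ) : Prop where
  contF : ContinuousOn f (Ici 0)
  contG : ContinuousOn g (Ici 0)
  posF : ∀ r, 0 ≤ r → 0 < f r
  nonnegG : ∀ r, 0 ≤ r → 0 ≤ g r
  initF : f 0 = a
  initG : g 0 = 0
  derivF : ∀ r, 0 < r → HasDerivAt f (-(g r ^ m)) r
  derivG : ∀ r, 0 < r → HasDerivAt g (f r - g r - k / r * g r) r

namespace PosSystem

variable {k : ℕ} {m a : ℝ} {f g : ℝ → ℝ}

/-- The weight `r ^ k * exp r` is an integrating factor: it turns the equation for `g` into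
`(r ^ k * exp r * g)' = r ^ k * exp r * f`. -/
lemma deriv_weighted (h : PosSystem k m a f g) {r : ℝ} (hr : 0 < r) :
    HasDerivAt (fun r => r ^ k * exp r * g r) (r ^ k * exp r * f r) r := by
  have h1 := (((hasDerivAt_pow k r).mul (Real.hasDerivAt_exp r)).mul (h.derivG r hr))
  refine h1.congr_deriv ?_
  rcases k with _ | k
  · simp; ring
  · simp only [Nat.add_sub_cancel, Pi.mul_apply]
    field_simp
    ring

lemma cont_weighted (h : PosSystem k m a f g) :
    ContinuousOn (fun r => r ^ k * exp r * g r) (Ici 0) :=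
  (by fun_prop : Continuous fun r : ℝ => r ^ k * exp r).continuousOn.mul h.contG

lemma antitone (h : PosSystem k m a f g) {x y : ℝ} (hx : 0 ≤ x) (hxy : x ≤ y) : f y ≤ f x := by
  have := le_of_hasDerivAt_nonneg (u := fun r => -f r) (u' := fun r => g r ^ m) hxy
    h.contF.neg hx
    (fun t ht => (h.derivF t (hx.trans_lt ht.1)).neg.congr_deriv (neg_neg _))
    (fun t ht => rpow_nonneg (h.nonnegG t (hx.trans ht.1.le)) _)
  simpa using this

lemma weighted_mono (h : PosSystem k m a f g) {x y : ℝ} (hx : 0 ≤ x) (hxy : x ≤ y) :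
    x ^ k * exp x * g x ≤ y ^ k * exp y * g y :=
  le_of_hasDerivAt_nonneg (u := fun r => r ^ k * exp r * g r)
    (u' := fun r => r ^ k * exp r * f r) hxy
    h.cont_weighted hx
    (fun t ht => h.deriv_weighted (hx.trans_lt ht.1))
    (fun t ht => by
      have h0 : 0 ≤ t := hx.trans ht.1.le
      have := h.posF t h0
      positivity)

/-- Since `f` is decreasing, the weighted flux `∫₀ʳ s ^ k * exp s * f s` is at least
`f r * r ^ (k + 1) / (k + 1)`. -/
lemma weighted_lower (h : PosSystem k m a f g) {r : ℝ} (hr : 0 ≤ r) :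
    f r * (r ^ (k + 1) / (k + 1)) ≤ r ^ k * exp r * g r := by
  have hk : (0 : ℝ) < k + 1 := by positivity
  have := le_of_hasDerivAt_nonneg
    (u := fun r => r ^ k * exp r * g r - f r * (r ^ (k + 1) / (k + 1)))
    (u' := fun r => r ^ k * exp r * f r - (-(g r ^ m) * (r ^ (k + 1) / (k + 1)) + f r * r ^ k)) hr
    (h.cont_weighted.sub (h.contF.mul (by fun_prop))) le_rfl
    (fun t ht => by
      have h1 : HasDerivAt (fun r : ℝ => r ^ (k + 1) / (k + 1)) (t ^ k) t := by
        refine ((hasDerivAt_pow (k + 1) t).div_const ((k : ℝ) + 1)).congr_deriv ?_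
        simp only [Nat.add_sub_cancel]
        push_cast
        field_simp
      exact (h.deriv_weighted ht.1).sub ((h.derivF t ht.1).mul h1))
    (fun t ht => by
      have h0 : 0 < t := ht.1
      have hf := h.posF t h0.le
      have hg := rpow_nonneg (h.nonnegG t h0.le) m
      have he : 1 ≤ exp t := Real.one_le_exp h0.le
      have h2 : 0 ≤ g t ^ m * (t ^ (k + 1) / (k + 1)) := by positivity
      have h3 : 0 ≤ (t ^ k * f t) * (exp t - 1) :=
        mul_nonneg (by positivity) (by linarith)
      nlinarith)
  simp only [h.initG] at this
  simp at this
  linarith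

/-! ### Bounds at `1 / 2` independent of the height -/

/-- Integrating `f ^ (-m) * f' ≤ -(c * r) ^ m` bounds `f (1 / 2)` independently of `a = f 0`;
this is where superlinearity `1 < m` enters. -/
lemma upper_half (h : PosSystem k m a f g) (hm : 1 < m) :
    (m - 1) * (1 / (3 * (k + 1))) ^ m * ((1 / 2) ^ (m + 1) / (m + 1)) ≤ f (1 / 2) ^ (1 - m) := by
  have hk : (0 : ℝ) < k + 1 := by positivity
  set c : ℝ := 1 / (3 * (k + 1)) with hc
  have hcpos : 0 < c := by positivity
  have := le_of_hasDerivAt_nonneg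
    (u := fun r => f r ^ (1 - m) - (m - 1) * c ^ m * (r ^ (m + 1) / (m + 1)))
    (u' := fun r => -(g r ^ m) * (1 - m) * f r ^ (1 - m - 1) - (m - 1) * c ^ m * r ^ m)
    (x := 0) (y := 1 / 2) (by norm_num)
    ((h.contF.rpow_const (fun t ht => Or.inl (h.posF t ht).ne')).sub
      (Continuous.continuousOn (by
        have : Continuous fun r : ℝ => r ^ (m + 1) :=
          Real.continuous_rpow_const (by linarith)
        fun_prop))) le_rfl
    (fun t ht => by
      have h1 : HasDerivAt (fun r : ℝ => r ^ (m + 1) / (m + 1)) (t ^ m) t := by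
        refine ((Real.hasDerivAt_rpow_const (p := m + 1)
          (Or.inl (ne_of_gt ht.1))).div_const (m + 1)).congr_deriv ?_
        rw [add_sub_cancel_right]
        field_simp
      exact ((h.derivF t ht.1).rpow_const (Or.inl (h.posF t ht.1.le).ne')).sub
        (h1.const_mul _))
    (fun t ht => by
      have h0 : 0 < t := ht.1
      have hf := h.posF t h0.le
      have hg := h.nonnegG t h0.le
      have hlow := h.weighted_lower h0.le
      have he : exp t ≤ 3 := by
        have : exp t ≤ exp 1 := Real.exp_le_exp.2 (by have := ht.2; linarith)
        linarith [Real.exp_one_lt_d9]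
      have hgl : f t * (c * t) ≤ g t := by
        have hpk : 0 < t ^ k := by positivity
        have h2 : t ^ k * (f t * (t / (k + 1))) ≤ t ^ k * (exp t * g t) := by
          calc _ = f t * (t ^ (k + 1) / (k + 1)) := by ring
            _ ≤ _ := hlow
            _ = _ := by ring
        have h3 := le_of_mul_le_mul_left h2 hpk
        have h4 : exp t * g t ≤ 3 * g t := by gcongr
        have h5 : f t * (c * t) = f t * (t / (k + 1)) / 3 := by rw [hc]; field_simp
        rw [h5]; linarith
      have hgm : f t ^ m * (c ^ m * t ^ m) ≤ g t ^ m := by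
        rw [← mul_rpow hcpos.le h0.le, ← mul_rpow hf.le (by positivity)]
        exact rpow_le_rpow (by positivity) hgl (by linarith)
      have hinv : f t ^ (1 - m - 1) * f t ^ m = 1 := by
        rw [← rpow_add hf]; simp
      have hfp : 0 < f t ^ (1 - m - 1) := rpow_pos_of_pos hf _
      have h6 : c ^ m * t ^ m ≤ f t ^ (1 - m - 1) * g t ^ m := by
        calc c ^ m * t ^ m = f t ^ (1 - m - 1) * (f t ^ m * (c ^ m * t ^ m)) := by
              rw [← mul_assoc, hinv, one_mul]
          _ ≤ _ := by gcongr
      have h7 := mul_le_mul_of_nonneg_left h6 (by linarith : (0 : ℝ) ≤ m - 1)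
      show 0 ≤ _
      linarith)
  have h0 : (0 : ℝ) ^ (m + 1) = 0 := zero_rpow (by linarith)
  have h1 : 0 ≤ f 0 ^ (1 - m) := rpow_nonneg (h.posF 0 le_rfl).le _
  simp only [h0, zero_div, mul_zero, sub_zero] at this
  linarith

/-- The decrease of `f` across `[1 / 2, 1]` is driven by the flux already present at `1 / 2`. -/
lemma weighted_half_le (h : PosSystem k m a f g) (hm : 1 < m) :
    ((1 / 2) ^ k * exp (1 / 2) * g (1 / 2) / 3) ^ m ≤ 2 * f (1 / 2) := by
  set W := (1 / 2) ^ k * exp (1 / 2) * g (1 / 2) with hW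
  have hW0 : 0 ≤ W := by
    have := h.nonnegG (1 / 2) (by norm_num)
    positivity
  have := le_of_hasDerivAt_nonneg
    (u := fun r => -f r - (W / 3) ^ m * r) (u' := fun r => g r ^ m - (W / 3) ^ m)
    (x := 1 / 2) (y := 1) (by norm_num)
    (h.contF.neg.sub (by fun_prop)) (by norm_num)
    (fun t ht => by
      have ht0 : 0 < t := by have := ht.1; linarith
      exact ((h.derivF t ht0).neg.sub ((hasDerivAt_id t).const_mul ((W / 3) ^ m))).congr_deriv
        (by ring))
    (fun t ht => by
      have ht0 : 0 < t := by have := ht.1; linarith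
      have hw := h.weighted_mono (x := 1 / 2) (y := t) (by norm_num) ht.1.le
      rw [← hW] at hw
      have hg := h.nonnegG t ht0.le
      have he : exp t ≤ 3 := by
        have : exp t ≤ exp 1 := Real.exp_le_exp.2 ht.2.le
        linarith [Real.exp_one_lt_d9]
      have hp : t ^ k ≤ 1 := pow_le_one₀ ht0.le ht.2.le
      have h3 : t ^ k * exp t * g t ≤ 1 * 3 * g t := by gcongr
      have : (W / 3) ^ m ≤ g t ^ m :=
        rpow_le_rpow (by positivity) (by linarith) (by linarith)
      exact sub_nonneg.2 this)
  have h1 := h.posF 1 (by norm_num)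
  linarith

/-! ### Growth of the weighted flux with the height -/

/-- `f` stays above `a / 2` on the natural length scale `a ^ (-(m - 1) / (m + 1))`. -/
lemma half_le (h : PosSystem k m a f g) (hm : 1 < m) {r : ℝ} (hr : 0 ≤ r)
    (hr2 : a ^ m * r ^ (m + 1) ≤ a / 2) : a / 2 ≤ f r := by
  have ha : 0 < a := h.initF ▸ h.posF 0 le_rfl
  have hg : ∀ t, 0 ≤ t → g t ≤ a * t := by
    intro t ht
    have := le_of_hasDerivAt_nonneg
      (u := fun r => a * r - g r) (u' := fun r => a - (f r - g r - k / r * g r)) ht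
      (ContinuousOn.sub (by fun_prop) h.contG) le_rfl
      (fun s hs => by
        exact (((hasDerivAt_id s).const_mul a).sub (h.derivG s hs.1)).congr_deriv (by ring))
      (fun s hs => by
        have hs0 : 0 < s := hs.1
        have h1 := h.antitone le_rfl hs0.le
        have h2 := h.nonnegG s hs0.le
        have h3 : 0 ≤ k / s * g s := by positivity
        rw [h.initF] at h1
        show 0 ≤ _
        linarith)
    simp only [h.initG, mul_zero, sub_zero] at this
    linarith
  have := le_of_hasDerivAt_nonneg
    (u := fun r => f r + a ^ m * (r ^ (m + 1) / (m + 1)))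
    (u' := fun r => -(g r ^ m) + a ^ m * r ^ m) hr
    (h.contF.add (Continuous.continuousOn (by
        have : Continuous fun r : ℝ => r ^ (m + 1) :=
          Real.continuous_rpow_const (by linarith)
        fun_prop))) le_rfl
    (fun t ht => by
      have h1 : HasDerivAt (fun r : ℝ => r ^ (m + 1) / (m + 1)) (t ^ m) t := by
        refine ((Real.hasDerivAt_rpow_const (p := m + 1)
          (Or.inl (ne_of_gt ht.1))).div_const (m + 1)).congr_deriv ?_
        rw [add_sub_cancel_right]
        field_simp
      exact (h.derivF t ht.1).add (h1.const_mul _))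
    (fun t ht => by
      have ht0 : 0 < t := ht.1
      have h1 := rpow_le_rpow (h.nonnegG t ht0.le) (hg t ht0.le) (by linarith : 0 ≤ m)
      rw [mul_rpow ha.le ht0.le] at h1
      show 0 ≤ _
      linarith)
  have h0 : (0 : ℝ) ^ (m + 1) = 0 := zero_rpow (by linarith)
  simp only [h0, zero_div, mul_zero, add_zero, h.initF] at this
  have h2 : a ^ m * (r ^ (m + 1) / (m + 1)) ≤ a ^ m * r ^ (m + 1) := by
    gcongr
    exact div_le_self (by positivity) (by linarith)
  linarith

/-- The mass of `f` on its natural length scale bounds the weighted flux at `1 / 2` from below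
by a positive power of `a`. -/
lemma weighted_half_lower (h : PosSystem k m a f g) (hm : 1 < m) (ha : 1 ≤ a) :
    a ^ ((k + 2 - m * k) / (m + 1)) * ((1 / 2) ^ (k + 2) / (k + 1)) ≤
      (1 / 2) ^ k * exp (1 / 2) * g (1 / 2) := by
  have ha0 : 0 < a := by linarith
  set r : ℝ := 1 / 2 * a ^ (-(m - 1) / (m + 1)) with hr
  have hr0 : 0 < r := by positivity
  have hrh : r ≤ 1 / 2 := by
    have : a ^ (-(m - 1) / (m + 1)) ≤ 1 :=
      rpow_le_one_of_one_le_of_nonpos ha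
        (div_nonpos_of_nonpos_of_nonneg (by linarith) (by linarith))
    linarith
  have hrp : a ^ m * r ^ (m + 1) ≤ a / 2 := by
    rw [hr, mul_rpow (by norm_num) (by positivity), ← rpow_mul ha0.le,
      div_mul_cancel₀ _ (by linarith : m + 1 ≠ 0)]
    have h1 : ((1 : ℝ) / 2) ^ (m + 1) ≤ (1 / 2) ^ (1 : ℝ) :=
      rpow_le_rpow_of_exponent_ge (by norm_num) (by norm_num) (by linarith)
    rw [rpow_one] at h1
    have h2 : a ^ m * a ^ (-(m - 1)) = a := by
      rw [← rpow_add ha0]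
      simp
    calc a ^ m * ((1 / 2) ^ (m + 1) * a ^ (-(m - 1)))
        = (a ^ m * a ^ (-(m - 1))) * (1 / 2) ^ (m + 1) := by ring
      _ = a * (1 / 2) ^ (m + 1) := by rw [h2]
      _ ≤ a * (1 / 2) := by gcongr
      _ = a / 2 := by ring
  have hf := h.half_le hm hr0.le hrp
  refine le_trans ?_ ((h.weighted_lower hr0.le).trans (h.weighted_mono hr0.le hrh))
  refine le_trans (le_of_eq ?_) (mul_le_mul_of_nonneg_right hf (by positivity))
  have h3 : a ^ (((k : ℝ) + 2 - m * k) / (m + 1)) = a * (a ^ (-(m - 1) / (m + 1))) ^ (k + 1) := by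
    rw [← rpow_natCast, ← rpow_mul ha0.le]
    nth_rewrite 2 [← rpow_one a]
    rw [← rpow_add ha0]
    congr 1
    have : m + 1 ≠ 0 := by linarith
    push_cast
    field_simp
    ring
  rw [h3, hr, mul_pow]
  ring

end PosSystem

/-- The height of a positive profile is bounded by a constant depending only on `k` and `m`. -/
lemma exists_bound (k : ℕ) (m : ℝ) (hm : 1 < m) (hmk : m * k < k + 2) :
    ∃ A : ℝ, 0 < A ∧ ∀ a f g, PosSystem k m a f g → a ≤ A := by
  have hk : (0 : ℝ) < k + 1 := by positivity
  have hm1 : (0 : ℝ) < m - 1 := by linarith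
  set c : ℝ := (m - 1) * (1 / (3 * (k + 1))) ^ m * ((1 / 2) ^ (m + 1) / (m + 1)) with hc
  have hcpos : 0 < c := by
    have : 0 < m + 1 := by linarith
    positivity
  set ε : ℝ := (k + 2 - m * k) / (m + 1) with hε
  have hεpos : 0 < ε := div_pos (by linarith) (by linarith)
  set C : ℝ := 3 * (2 * c ^ (1 - m)⁻¹) ^ m⁻¹ / ((1 / 2) ^ (k + 2) / (k + 1)) with hC
  refine ⟨max 1 (C ^ ε⁻¹), by positivity, fun a f g h => ?_⟩
  by_cases ha : a ≤ 1
  · exact ha.trans (le_max_left _ _)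
  push Not at ha
  refine le_trans ?_ (le_max_right _ _)
  have h1 := h.upper_half hm
  rw [← hc] at h1
  have h2 := h.weighted_half_le hm
  have h3 := h.weighted_half_lower hm ha.le
  rw [← hε] at h3
  have hf := h.posF (1 / 2) (by norm_num)
  have hg := h.nonnegG (1 / 2) (by norm_num)
  have h4 : f (1 / 2) ≤ c ^ (1 - m)⁻¹ := by
    have := rpow_le_rpow_of_nonpos hcpos h1 (inv_nonpos.2 (by linarith : 1 - m ≤ 0))
    rwa [rpow_rpow_inv hf.le (by linarith)] at this
  set W := (1 / 2) ^ k * exp (1 / 2) * g (1 / 2) with hW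
  have hW0 : 0 ≤ W := by positivity
  have h5 : W / 3 ≤ (2 * c ^ (1 - m)⁻¹) ^ m⁻¹ := by
    have := rpow_le_rpow (by positivity) (h2.trans (by gcongr : _ ≤ 2 * c ^ (1 - m)⁻¹))
      (by positivity : 0 ≤ m⁻¹)
    rwa [rpow_rpow_inv (by positivity) (by linarith)] at this
  have h6 : a ^ ε ≤ C := by
    rw [hC, le_div_iff₀ (by positivity)]
    linarith
  have h7 := rpow_le_rpow (by positivity) h6 (inv_nonneg.2 hεpos.le)
  rwa [rpow_rpow_inv (by linarith) hεpos.ne'] at h7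

/-! ### From the profile equation to the system -/

/-- While `f > 0` the flux `g` stays nonnegative: at a negative minimum of `r ^ k * exp (-r) * g`
its derivative would equal `r ^ k * exp (-r) * f > 0`. -/
lemma flux_nonneg {k : ℕ} {f g : ℝ → ℝ} (hc : ContinuousOn g (Ici 0)) (h0 : g 0 = 0)
    (hf : ∀ r, 0 ≤ r → 0 < f r)
    (hd : ∀ r, 0 < r → HasDerivAt g (f r - |g r| - k / r * g r) r) :
    ∀ r, 0 ≤ r → 0 ≤ g r := by
  intro R hR
  by_contra! hneg
  have hcont : ContinuousOn (fun r => r ^ k * exp (-r) * g r) (Icc 0 R) :=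
    (by fun_prop : Continuous fun r : ℝ => r ^ k * exp (-r)).continuousOn.mul
      (hc.mono fun t ht => ht.1)
  obtain ⟨s, hs, hmin⟩ := isCompact_Icc.exists_isMinOn (nonempty_Icc.2 hR) hcont
  have hRpos : 0 < R := lt_of_le_of_ne hR (by rintro rfl; linarith)
  have hsneg : s ^ k * exp (-s) * g s < 0 :=
    lt_of_le_of_lt (hmin (right_mem_Icc.2 hR))
      (mul_neg_of_pos_of_neg (by positivity) hneg)
  have hspos : 0 < s := lt_of_le_of_ne hs.1 (by rintro rfl; simp [h0] at hsneg)
  have hgs : g s < 0 := by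
    by_contra! hg
    have : 0 ≤ s ^ k * exp (-s) * g s := by positivity
    linarith
  have hder : HasDerivAt (fun r => r ^ k * exp (-r) * g r) (s ^ k * exp (-s) * f s) s := by
    have h1 := (((hasDerivAt_pow k s).mul ((hasDerivAt_neg s).exp)).mul (hd s hspos))
    refine h1.congr_deriv ?_
    rw [abs_of_neg hgs]
    rcases k with _ | k
    · simp; ring
    · simp only [Nat.add_sub_cancel, Pi.mul_apply]
      field_simp
      ring
  have hpos : 0 < s ^ k * exp (-s) * f s := by
    have := hf s hspos.le
    positivity
  -- A positive derivative at `s` produces smaller values just to the left of `s`.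
  have hslope := (hasDerivAt_iff_tendsto_slope_left_right.1 hder).1
  have hev : ∀ᶠ t in nhdsWithin s (Iio s),
      0 < slope (fun r => r ^ k * exp (-r) * g r) s t := hslope.eventually_const_lt hpos
  have hmem : Ioo 0 s ∈ nhdsWithin s (Iio s) := Ioo_mem_nhdsLT hspos
  obtain ⟨t, ht, htm⟩ := (hev.and hmem).exists
  have hle := hmin (⟨htm.1.le, htm.2.le.trans hs.2⟩ : t ∈ Icc 0 R)
  rw [slope_def_field] at ht
  have := div_nonpos_of_nonneg_of_nonpos (sub_nonneg.2 hle) (by linarith [htm.2] : t - s ≤ 0)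
  linarith

/-- A positive profile solves the first-order system. -/
lemma IsProfileSol.posSystem {N : ℕ} (hN : 2 ≤ N) {p a : ℝ} (hp : 1 < p) {f f' F' : ℝ → ℝ}
    (h : IsProfileSol N p a f f' F') (hpos : ∀ r, 0 ≤ r → 0 < f r) :
    PosSystem (N - 1) (p - 1)⁻¹ a f (gFun p f') := by
  obtain ⟨hf, -, hF, -, hode, ha, h0⟩ := h
  have hp1 : 0 < p - 1 := by linarith
  have habs : ∀ r, |gFun p f' r| = |f' r| ^ (p - 1) := by
    intro r
    rw [gFun, abs_neg, abs_mul, abs_of_nonneg (rpow_nonneg (abs_nonneg _) _)]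
    by_cases hz : f' r = 0
    · simp [hz, zero_rpow hp1.ne']
    · rw [show p - 1 = (p - 2) + 1 by ring, rpow_add_one (abs_ne_zero.2 hz)]
  have hcN : ((N - 1 : ℕ) : ℝ) = (N : ℝ) - 1 := by
    rw [Nat.cast_sub (by omega)]; simp
  have hcG : ContinuousOn (gFun p f') (Ici 0) :=
    fun r hr => (hF r hr).continuousWithinAt.neg
  have hG0 : gFun p f' 0 = 0 := by simp [gFun, h0]
  have hdG : ∀ r, 0 < r → HasDerivAt (gFun p f')
      (f r - |gFun p f' r| - ((N - 1 : ℕ) : ℝ) / r * gFun p f' r) r := by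
    intro r hr
    have h1 : HasDerivAt (gFun p f') (-F' r) r :=
      ((hF r hr.le).hasDerivAt (Ici_mem_nhds hr)).neg
    refine h1.congr_deriv ?_
    rw [habs, hcN, gFun]
    linarith [hode r hr]
  have hGn := flux_nonneg hcG hG0 hpos hdG
  refine ⟨fun r hr => (hf r hr).continuousWithinAt, hcG, hpos, hGn, ha, hG0,
    fun r hr => ?_, fun r hr => ?_⟩
  · refine ((hf r hr.le).hasDerivAt (Ici_mem_nhds hr)).congr_deriv ?_
    have hle : f' r ≤ 0 := by
      by_contra! hgt
      have h2 := hGn r hr.le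
      have h3 : 0 < |f' r| ^ (p - 2) * f' r :=
        mul_pos (rpow_pos_of_pos (abs_pos.2 hgt.ne') _) hgt
      rw [gFun] at h2
      linarith
    rw [← abs_of_nonneg (hGn r hr.le), habs, rpow_rpow_inv (abs_nonneg _) hp1.ne',
      abs_of_nonpos hle, neg_neg]
  · have := hdG r hr
    rwa [abs_of_nonneg (hGn r hr.le)] at this

/-- there is `a_∞ > 0` such that for all `a > a_∞` the profile vanishes
at some finite radius. -/
theorem stmt6 (N : ℕ) (hN : 2 ≤ N) (p : ℝ)
    (hp1 : 2 * (N : ℝ) / ((N : ℝ) + 1) < p) (hp2 : p < 2) :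
    ∃ aInf : ℝ, 0 < aInf ∧ ∀ a, aInf < a →
      ∀ f f' F' : ℝ → ℝ, IsProfileSol N p a f f' F' →
        ∃ R : ℝ, 0 < R ∧ f R = 0 := by
  have hN' : (2 : ℝ) ≤ N := by exact_mod_cast hN
  rw [div_lt_iff₀ (by linarith)] at hp1
  have hp : 1 < p := by nlinarith
  have hcN : ((N - 1 : ℕ) : ℝ) = (N : ℝ) - 1 := by
    rw [Nat.cast_sub (by omega)]; simp
  obtain ⟨A, hA, hbound⟩ := exists_bound (N - 1) (p - 1)⁻¹
    ((one_lt_inv₀ (by linarith)).2 (by linarith)) (by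
      rw [hcN, inv_mul_lt_iff₀ (by linarith)]
      nlinarith)
  refine ⟨A, hA, fun a haA f f' F' h => ?_⟩
  by_contra! hne
  have hpos : ∀ r, 0 ≤ r → 0 < f r := by
    intro r hr
    by_contra! hle
    have hc : ContinuousOn f (Icc 0 r) :=
      fun t ht => ((h.1 t ht.1).continuousWithinAt).mono fun s hs => hs.1
    have hf0 : f 0 = a := h.2.2.2.2.2.1
    obtain ⟨s, hs, hs0⟩ := intermediate_value_Icc' hr hc ⟨hle, by rw [hf0]; linarith⟩
    have : s ≠ 0 := by rintro rfl; linarith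
    exact hne s (lt_of_le_of_ne hs.1 this.symm) hs0
  exact absurd (hbound a f _ (h.posSystem hN hp hpos)) (not_le.2 haA)
end

section
/- Let a > 0 and assume g(r;a) > 0 for all r ∈ (0,∞). Then w(·;a) is unbounded on (0,∞) if and only if w'(r;a)/w(r;a) → 1 as r → ∞. Moreover, if w(·;a) is unbounded, then w(r;a) · ((2-p)r/(p-1))^{(p-1)/(2-p)} / ρ(r) → 1 as r → ∞; equivalently, f(r;a) · ((2-p)r/(p-1))^{(p-1)/(2-p)} → 1 as r → ∞. -/
/-! With `g > 0` the profile equation is the first-order system `f' = -g ^ q`,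
`g' = f - (1 + (N - 1) / r) g`, where `q = 1 / (p - 1) > 1`, and `w = ρ g` satisfies `w' = ρ f`.
Comparison arguments give `f > 0` (so `w` is increasing) and `f, g → 0`.

The ratio `u = w'/w = f/g` solves `u' = u (1 + (N - 1) / r - u) - g ^ (q - 1)`, which is
asymptotically the logistic equation. Hence either `u → 1`, or `u` is eventually below any given
`δ > 0`. In the second case `g` decays almost like `exp (-r)`, and since `f' = -g ^ q` with `q > 1`
the function `f` decays faster than `exp (-r)`, so `w' = ρ f` is integrable and `w` is bounded
(`ProfileSys.bounded_of_ratio_le`). Thus unboundedness of `w` forces `u → 1`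
(`ProfileSys.tendsto_ratio`). Conversely `u → 1` makes `w' ≥ w / 2` eventually, so `w` is unbounded.

Finally, `f ~ g` turns `f' = -g ^ q` into `(f ^ (1 - q))' → q - 1`, so `f ^ (1 - q) ~ (q - 1) r`
with `q - 1 = (2 - p) / (p - 1)`; this is the stated decay of `f`, and of `g = w / ρ`. -/

open Real Set Filter MeasureTheory

/-! ### Comparison lemmas -/

/-- A function on `[r₀, ∞)` with nonnegative derivative is nondecreasing there. -/
lemma mono_of_hasDerivAt {u u' : ℝ → ℝ} {r₀ : ℝ} (hu : ∀ r, r₀ ≤ r → HasDerivAt u (u' r) r)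
    (hc : ∀ r, r₀ ≤ r → 0 ≤ u' r) {s r : ℝ} (hs : r₀ ≤ s) (hsr : s ≤ r) : u s ≤ u r := by
  have hm : MonotoneOn u (Ici r₀) := by
    refine monotoneOn_of_deriv_nonneg (convex_Ici r₀)
      (fun x hx => (hu x hx).continuousAt.continuousWithinAt)
      (fun x hx => (hu x (interior_subset hx)).differentiableAt.differentiableWithinAt) ?_
    intro x hx
    rw [(hu x (interior_subset hx)).deriv]
    exact hc x (interior_subset hx)
  exact hm hs (hs.trans hsr) hsr

lemma growth_of_hasDerivAt {u u' : ℝ → ℝ} {r₀ c : ℝ}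
    (hu : ∀ r, r₀ ≤ r → HasDerivAt u (u' r) r)
    (hc : ∀ r, r₀ ≤ r → c ≤ u' r) {r : ℝ} (hr : r₀ ≤ r) : u r₀ + c * (r - r₀) ≤ u r := by
  have h := mono_of_hasDerivAt (u := fun s => u s - c * s) (u' := fun s => u' s - c * 1)
    (fun s hs => (hu s hs).sub ((hasDerivAt_id s).const_mul c))
    (fun s hs => by have := hc s hs; linarith) le_rfl hr
  linarith

/-- If `u' > 0` wherever `u = m`, then the half-line `[m, ∞)` is forward invariant for `u`. -/
lemma barrier {u u' : ℝ → ℝ} {r₀ m : ℝ} (hu : ∀ r, r₀ ≤ r → HasDerivAt u (u' r) r)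
    (h0 : m ≤ u r₀) (hb : ∀ r, r₀ ≤ r → u r = m → 0 < u' r) {r : ℝ} (hr : r₀ ≤ r) :
    m ≤ u r := by
  have h := image_le_of_deriv_right_lt_deriv_boundary (f := fun s => - u s)
    (f' := fun s => - u' s) (a := r₀) (b := r) (B := fun _ => -m) (B' := fun _ => 0)
    (fun x hx => (hu x hx.1).neg.continuousAt.continuousWithinAt)
    (fun x hx => (hu x hx.1).neg.hasDerivWithinAt)
    (by simpa using h0) (fun x => hasDerivAt_const x _)
    (fun x hx hxe => by
      have := hb x hx.1 (neg_injective hxe)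
      linarith)
    (right_mem_Icc.2 hr)
  linarith

/-- If `u` starts above `m` and has slope at least `c > 0` as long as it lies in `[m, M]`,
then it passes above `M` in finite time and stays there. -/
lemma escape {u u' : ℝ → ℝ} {r₀ m M c : ℝ} (hu : ∀ r, r₀ ≤ r → HasDerivAt u (u' r) r)
    (h0 : m ≤ u r₀) (hmM : m ≤ M) (hc : 0 < c)
    (hb : ∀ r, r₀ ≤ r → m ≤ u r → u r ≤ M → c ≤ u' r) :
    ∀ᶠ r in atTop, M ≤ u r := by
  have h1 : ∀ r, r₀ ≤ r → m ≤ u r := fun r hr =>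
    barrier hu h0 (fun s hs hse => hc.trans_le (hb s hs hse.ge (hse.le.trans hmM))) hr
  obtain ⟨r₁, hr₁, hM⟩ : ∃ r₁, r₀ ≤ r₁ ∧ M ≤ u r₁ := by
    by_contra! hcon
    have hr : r₀ ≤ r₀ + (M - u r₀) / c := by
      have := hcon r₀ le_rfl
      have : 0 ≤ (M - u r₀) / c := div_nonneg (by linarith) hc.le
      linarith
    have h2 := growth_of_hasDerivAt hu (fun s hs => hb s hs (h1 s hs) (hcon s hs).le) hr
    have h3 := hcon _ hr
    have h4 : c * (r₀ + (M - u r₀) / c - r₀) = M - u r₀ := by field_simp; ring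
    rw [h4] at h2
    linarith
  filter_upwards [eventually_ge_atTop r₁] with r hr
  exact barrier (fun s hs => hu s (hr₁.trans hs)) hM
    (fun s hs hse => hc.trans_le (hb s (hr₁.trans hs) (h1 s (hr₁.trans hs)) hse.le)) hr

/-- L'Hôpital's rule at infinity against the identity: if `h' → c` then `h(r)/r → c`. -/
lemma tendsto_div_id_of_deriv_s12 {h h' : ℝ → ℝ} {c : ℝ}
    (hh : ∀ r, 0 < r → HasDerivAt h (h' r) r) (hlim : Tendsto h' atTop (nhds c)) :
    Tendsto (fun r => h r / r) atTop (nhds c) := by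
  rw [tendsto_order]
  constructor
  · intro b hb
    obtain ⟨d, hbd, hdc⟩ := exists_between hb
    obtain ⟨R, hR⟩ := eventually_atTop.1 ((hlim.eventually (lt_mem_nhds hdc)).and
      (eventually_gt_atTop 0))
    have h1 : ∀ᶠ r in atTop, (d * R - h R) < (d - b) * r :=
      (tendsto_id.const_mul_atTop (sub_pos.2 hbd)).eventually_gt_atTop _
    filter_upwards [h1, eventually_ge_atTop R] with r hr1 hr
    have hr0 : 0 < r := (hR r hr).2
    have h2 := growth_of_hasDerivAt (fun s hs => hh s (hR s hs).2) (fun s hs => (hR s hs).1.le) hr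
    rw [lt_div_iff₀ hr0]
    nlinarith
  · intro b hb
    obtain ⟨d, hcd, hdb⟩ := exists_between hb
    obtain ⟨R, hR⟩ := eventually_atTop.1 ((hlim.eventually (gt_mem_nhds hcd)).and
      (eventually_gt_atTop 0))
    have h1 : ∀ᶠ r in atTop, (h R - d * R) < (b - d) * r :=
      (tendsto_id.const_mul_atTop (sub_pos.2 hdb)).eventually_gt_atTop _
    filter_upwards [h1, eventually_ge_atTop R] with r hr1 hr
    have hr0 : 0 < r := (hR r hr).2
    have h2 := growth_of_hasDerivAt (u := fun s => - h s) (u' := fun s => - h' s) (c := -d)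
      (fun s hs => (hh s (hR s hs).2).neg)
      (fun s hs => neg_le_neg (hR s hs).1.le) hr
    rw [div_lt_iff₀ hr0]
    nlinarith

/-! ### The first-order system -/

/-- The profile equation as a first-order system in `f` and `g = -|f'|^{p-2} f'`, restricted to
`r > 0` and to solutions with `g > 0`. Here `q = 1/(p-1)` and `n = N - 1`. -/
structure ProfileSys (n : ℕ) (q : ℝ) (f g : ℝ → ℝ) : Prop where
  hq : 1 < q
  df : ∀ r, 0 < r → HasDerivAt f (-(g r) ^ q) r
  dg : ∀ r, 0 < r → HasDerivAt g (f r - (1 + n / r) * g r) r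
  pos : ∀ r, 0 < r → 0 < g r

namespace ProfileSys

variable {n : ℕ} {q : ℝ} {f g : ℝ → ℝ}

lemma strictAnti (h : ProfileSys n q f g) : StrictAntiOn f (Ioi 0) := by
  refine strictAntiOn_of_deriv_neg (convex_Ioi 0)
    (fun x hx => (h.df x hx).continuousAt.continuousWithinAt) ?_
  intro x hx
  rw [interior_Ioi] at hx
  rw [(h.df x hx).deriv]
  have := rpow_pos_of_pos (h.pos x hx) q
  linarith

/-- If `f` reached `0` it would be bounded above by a negative constant, hence so would `g'`,
contradicting `g > 0`. -/
lemma f_pos (h : ProfileSys n q f g) {r : ℝ} (hr : 0 < r) : 0 < f r := by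
  by_contra! hcon
  have h1 : f (r + 1) < 0 :=
    (h.strictAnti hr (show (0:ℝ) < r + 1 by linarith) (by linarith)).trans_le hcon
  have hr1 : 0 < r + 1 := by linarith
  have h2 : ∀ᶠ s in atTop, 0 ≤ - g s := by
    refine escape (u' := fun s => - (f s - (1 + n / s) * g s)) (r₀ := r + 1) (m := - g (r + 1))
      (c := - f (r + 1)) (fun s hs => (h.dg s (hr1.trans_le hs)).neg) le_rfl ?_ (by linarith) ?_
    · have := h.pos _ hr1; linarith
    · intro s hs _ _
      have hs0 := hr1.trans_le hs
      have h3 : f s ≤ f (r + 1) := h.strictAnti.antitoneOn hr1 hs0 hs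
      have h4 : 0 ≤ (1 + n / s) * g s := mul_nonneg (by positivity) (h.pos s hs0).le
      linarith
  obtain ⟨s, hs, hs0⟩ := (h2.and (eventually_gt_atTop 0)).exists
  have := h.pos s hs0
  linarith

/-- If `f` stayed above some `l > 0`, then `g` would eventually exceed `l / 4`, and then
`f' = -g ^ q` would be bounded away from zero, forcing `f` to become negative. -/
lemma tendsto_f (h : ProfileSys n q f g) : Tendsto f atTop (nhds 0) := by
  rw [tendsto_order]
  constructor
  · intro b hb
    filter_upwards [eventually_gt_atTop 0] with r hr
    exact hb.trans (h.f_pos hr)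
  · intro l hl
    by_contra hcon
    have h1 : ∀ r, 0 < r → l ≤ f r := by
      intro r hr
      by_contra! hlt
      apply hcon
      filter_upwards [eventually_ge_atTop r] with s hs
      exact (h.strictAnti.antitoneOn hr (hr.trans_le hs) hs).trans_lt hlt
    have hR : (0:ℝ) < n + 1 := by positivity
    have h2 : ∀ᶠ s in atTop, l / 4 ≤ g s := by
      refine escape (u' := fun s => f s - (1 + n / s) * g s) (r₀ := n + 1) (m := 0)
        (c := l / 2) (fun s hs => h.dg s (hR.trans_le hs)) (h.pos _ hR).le
        (by linarith) (by linarith) ?_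
      intro s hs _ hgs
      have hs0 := hR.trans_le hs
      have h3 := h1 s hs0
      have h4 : (n:ℝ) / s ≤ 1 := by rw [div_le_one hs0]; linarith
      have h5 := h.pos s hs0
      nlinarith
    obtain ⟨R, hR⟩ := eventually_atTop.1 (h2.and (eventually_gt_atTop 0))
    have h3 : ∀ᶠ s in atTop, 0 ≤ - f s := by
      refine escape (u' := fun s => -(-(g s) ^ q)) (r₀ := R) (m := - f R)
        (c := (l / 4) ^ q) (fun s hs => (h.df s (hR s hs).2).neg) le_rfl ?_ (by positivity) ?_
      · have := h.f_pos (hR R le_rfl).2; linarith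
      · intro s hs _ _
        rw [neg_neg]
        exact rpow_le_rpow (by positivity) (hR s hs).1 (by linarith [h.hq])
    obtain ⟨s, hs, hs0⟩ := (h3.and (eventually_gt_atTop 0)).exists
    have := h.f_pos hs0
    linarith

lemma tendsto_g (h : ProfileSys n q f g) : Tendsto g atTop (nhds 0) := by
  rw [tendsto_order]
  constructor
  · intro b hb
    filter_upwards [eventually_gt_atTop 0] with r hr
    exact hb.trans (h.pos r hr)
  · intro l hl
    obtain ⟨R, hR⟩ := eventually_atTop.1
      ((h.tendsto_f.eventually (gt_mem_nhds (show (0:ℝ) < l / 4 by linarith))).and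
        (eventually_gt_atTop 0))
    have h2 : ∀ᶠ s in atTop, -(l / 2) ≤ - g s := by
      refine escape (u' := fun s => -(f s - (1 + n / s) * g s)) (r₀ := R)
        (m := min (- g R) (-(l / 2)))
        (c := l / 4) (fun s hs => (h.dg s (hR s hs).2).neg) (min_le_left _ _)
        (min_le_right _ _) (by linarith) ?_
      intro s hs _ hgs
      have hs0 := (hR s hs).2
      have h3 := (hR s hs).1
      have h4 : 0 ≤ (n:ℝ) / s := by positivity
      have h5 := mul_nonneg h4 (h.pos s hs0).le
      linarith
    filter_upwards [h2] with s hs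
    linarith

/-- `w' = ρ f`: the factor `ρ = r ^ n * exp r` integrates the linear part of the equation. -/
lemma deriv_w (h : ProfileSys n q f g) {r : ℝ} (hr : 0 < r) :
    HasDerivAt (fun s => s ^ n * exp s * g s) (r ^ n * exp r * f r) r := by
  have h1 := ((hasDerivAt_pow n r).mul (Real.hasDerivAt_exp r)).mul (h.dg r hr)
  refine h1.congr_deriv ?_
  rcases n with _ | n
  · simp; ring
  · simp only [Nat.add_sub_cancel, Pi.mul_apply]
    field_simp
    ring

lemma w_mono (h : ProfileSys n q f g) {s r : ℝ} (hs : 0 < s) (hsr : s ≤ r) :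
    s ^ n * exp s * g s ≤ r ^ n * exp r * g r :=
  mono_of_hasDerivAt (u := fun s => s ^ n * exp s * g s) (r₀ := s)
    (fun t ht => h.deriv_w (hs.trans_le ht))
    (fun t ht => by
      have h0 := hs.trans_le ht
      have := h.f_pos h0
      positivity) le_rfl hsr

/-- The Riccati-type equation satisfied by `w'/w = f/g`. -/
lemma deriv_ratio (h : ProfileSys n q f g) {r : ℝ} (hr : 0 < r) :
    HasDerivAt (fun s => f s / g s)
      (f r / g r * (1 + n / r - f r / g r) - g r ^ (q - 1)) r := by
  have hg := h.pos r hr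
  refine ((h.df r hr).div (h.dg r hr) hg.ne').congr_deriv ?_
  rw [rpow_sub_one hg.ne']
  field_simp
  ring

/-- If `w'/w` is eventually at most some `δ` with `(1 - δ) q > 1`, then `w` is bounded: `g` decays
like `exp (-(1 - δ) r)`, hence `f` decays like `exp (-(1 - δ) q r)`, and so `w' = ρ f` is
integrable. -/
lemma bounded_of_ratio_le (h : ProfileSys n q f g) {δ : ℝ} (hδ : 1 < (1 - δ) * q)
    (hu : ∀ᶠ r in atTop, f r / g r ≤ δ) :
    ∃ M : ℝ, ∀ r, 0 < r → r ^ n * exp r * g r ≤ M := by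
  obtain ⟨R, hR⟩ := eventually_atTop.1 (hu.and (eventually_ge_atTop (1:ℝ)))
  have hR0 : ∀ r, R ≤ r → 0 < r := fun r hr => zero_lt_one.trans_le (hR r hr).2
  set κ := (1 - δ) * q with hκ
  have hexp : ∀ c r : ℝ, HasDerivAt (fun s => exp (c * s)) (exp (c * r) * c) r := fun c r => by
    simpa using ((hasDerivAt_id r).const_mul c).exp
  obtain ⟨C, hC, hgC⟩ : ∃ C : ℝ, 0 < C ∧ ∀ r, R ≤ r → g r ≤ C * exp (-(1 - δ) * r) := by
    refine ⟨R ^ n * exp R * g R * exp (-δ * R), ?_, fun r hr => ?_⟩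
    · have := hR0 R le_rfl
      have := h.pos R this
      positivity
    have h1 := mono_of_hasDerivAt (u := fun s => -((s ^ n * exp s * g s) * exp (-δ * s)))
      (fun s hs => ((h.deriv_w (hR0 s hs)).mul (hexp (-δ) s)).neg) (fun s hs => ?_) le_rfl hr
    · have h2 : g r ≤ r ^ n * g r :=
        le_mul_of_one_le_left (h.pos r (hR0 r hr)).le (one_le_pow₀ (hR r hr).2)
      have h3 : exp (-(1 - δ) * r) * (exp r * exp (-δ * r)) = 1 := by
        rw [← exp_add, ← exp_add]; ring_nf; simp
      calc g r ≤ r ^ n * g r := h2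
        _ = (exp (-(1 - δ) * r) * (exp r * exp (-δ * r))) * (r ^ n * g r) := by rw [h3, one_mul]
        _ = (r ^ n * exp r * g r * exp (-δ * r)) * exp (-(1 - δ) * r) := by ring
        _ ≤ _ := by
          refine mul_le_mul_of_nonneg_right ?_ (exp_pos _).le
          linarith
    · have h4 := (hR s hs).1
      rw [div_le_iff₀ (h.pos s (hR0 s hs))] at h4
      have h5 := hR0 s hs
      have : 0 ≤ s ^ n * exp s * exp (-δ * s) * (δ * g s - f s) :=
        mul_nonneg (by positivity) (by linarith)
      linarith
  obtain ⟨D, hD, hfD⟩ : ∃ D : ℝ, 0 < D ∧ ∀ r, R ≤ r → f r ≤ D * exp (-κ * r) := by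
    have hκ0 : 0 < κ := by linarith
    refine ⟨C ^ q / κ, by positivity, fun r hr => ?_⟩
    have hlim : Tendsto (fun s => f s - C ^ q / κ * exp (-κ * s)) atTop (nhds 0) := by
      have : Tendsto (fun s => exp (-κ * s)) atTop (nhds 0) :=
        tendsto_exp_atBot.comp (tendsto_id.const_mul_atTop_of_neg (by linarith))
      simpa using h.tendsto_f.sub (this.const_mul (C ^ q / κ))
    have hle : f r - C ^ q / κ * exp (-κ * r) ≤ 0 := by
      refine ge_of_tendsto hlim ?_
      filter_upwards [eventually_ge_atTop r] with s hs
      refine mono_of_hasDerivAt (u := fun s => f s - C ^ q / κ * exp (-κ * s))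
        (fun t ht => (h.df t (hR0 t ht)).sub ((hexp (-κ) t).const_mul _)) (fun t ht => ?_) hr hs
      have h1 : g t ^ q ≤ C ^ q * exp (-κ * t) := by
        calc g t ^ q ≤ (C * exp (-(1 - δ) * t)) ^ q :=
              rpow_le_rpow (h.pos t (hR0 t ht)).le (hgC t ht) (by linarith [h.hq])
          _ = C ^ q * exp (-κ * t) := by
              rw [mul_rpow hC.le (exp_pos _).le, ← exp_mul]
              congr 2
              rw [hκ]; ring
      have h2 : C ^ q / κ * (exp (-κ * t) * -κ) = -(C ^ q * exp (-κ * t)) := by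
        field_simp
      rw [h2]
      linarith
    linarith
  -- The surplus exponent `κ - 1` is split in two: one half absorbs `r ^ n`.
  set σ := (κ - 1) / 2 with hσ
  have hσ0 : 0 < σ := by rw [hσ]; linarith
  have hpow : ∀ᶠ r : ℝ in atTop, r ^ n ≤ exp (σ * r) := by
    have := (isLittleO_pow_exp_pos_mul_atTop n hσ0).bound zero_lt_one
    filter_upwards [this, eventually_ge_atTop 0] with r hr hr0
    simpa [abs_of_nonneg hr0] using hr
  obtain ⟨S, hS⟩ := eventually_atTop.1 (hpow.and (eventually_ge_atTop R))
  refine ⟨S ^ n * exp S * g S + D / σ * exp (-σ * S), fun r hr => ?_⟩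
  refine (h.w_mono hr (le_max_left r S)).trans ?_
  set t := max r S
  have ht : S ≤ t := le_max_right r S
  have h1 := mono_of_hasDerivAt
    (u := fun s => -(s ^ n * exp s * g s + D / σ * exp (-σ * s)))
    (fun s hs => ((h.deriv_w (hR0 s (hS s hs).2)).add
      ((hexp (-σ) s).const_mul (D / σ))).neg) (fun s hs => ?_) le_rfl ht
  · have : 0 < D / σ * exp (-σ * t) := by positivity
    linarith
  · have h2 : D / σ * (exp (-σ * s) * -σ) = -(D * exp (-σ * s)) := by field_simp
    have h3 : s ^ n * exp s * f s ≤ D * exp (-σ * s) := by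
      have hs0 := hR0 s (hS s hs).2
      calc s ^ n * exp s * f s ≤ exp (σ * s) * exp s * (D * exp (-κ * s)) := by
            have := (hS s hs).1
            have := hfD s (hS s hs).2
            have := (h.f_pos hs0).le
            gcongr
        _ = D * (exp (σ * s) * exp s * exp (-κ * s)) := by ring
        _ = D * exp (-σ * s) := by
            rw [← exp_add, ← exp_add]
            congr 2
            rw [hσ]; ring
    rw [h2]
    linarith

/-- Since `g ^ (q - 1) → 0` and `n / r → 0`, the Riccati equation is asymptotically
`u' = u (1 - u)`; its repelling equilibrium `0` is excluded by unboundedness of `w`. -/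
lemma tendsto_ratio (h : ProfileSys n q f g)
    (hunb : ¬ ∃ M : ℝ, ∀ r, 0 < r → r ^ n * exp r * g r ≤ M) :
    Tendsto (fun r => f r / g r) atTop (nhds 1) := by
  have hq := h.hq
  have hε : Tendsto (fun r => g r ^ (q - 1)) atTop (nhds 0) := by
    have := h.tendsto_g.rpow_const (p := q - 1) (Or.inr (by linarith))
    rwa [zero_rpow (by linarith)] at this
  have hn : Tendsto (fun r : ℝ => (n:ℝ) / r) atTop (nhds 0) := tendsto_const_nhds.div_atTop tendsto_id
  obtain ⟨δ, hδ0, hδ1, hδq⟩ : ∃ δ : ℝ, 0 < δ ∧ δ < 1 ∧ 1 < (1 - δ) * q := by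
    refine ⟨(1 - 1 / q) / 2, ?_, ?_, ?_⟩
    · have : 1 / q < 1 := by rw [div_lt_one (by linarith)]; exact hq
      linarith
    · have : 0 < 1 / q := by positivity
      linarith
    · have : (1 - (1 - 1 / q) / 2) * q = (q + 1) / 2 := by field_simp; ring
      rw [this]; linarith
  have hfreq : ∃ᶠ r in atTop, δ < f r / g r := by
    intro hcon
    exact hunb (h.bounded_of_ratio_le hδq (hcon.mono fun r hr => not_lt.1 hr))
  rw [tendsto_order]
  constructor
  · intro b hb
    obtain ⟨d, hbd, hd1⟩ := exists_between (max_lt hb hδ1)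
    have hδd : δ < d := (le_max_right _ _).trans_lt hbd
    have hc : 0 < δ * (1 - d) / 2 := by
      have : 0 < 1 - d := by linarith
      positivity
    obtain ⟨R, hR⟩ := eventually_atTop.1 ((hε.eventually (gt_mem_nhds hc)).and
      (eventually_gt_atTop 0))
    obtain ⟨r₀, hr₀, hr₀R⟩ := (hfreq.and_eventually (eventually_ge_atTop R)).exists
    have h0 : ∀ s, r₀ ≤ s → 0 < s := fun s hs => (hR s (hr₀R.trans hs)).2
    have h1 := escape (fun s hs => h.deriv_ratio (h0 s hs)) hr₀.le hδd.le hc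
      (fun s hs h1 h2 => by
        have h3 := (hR s (hr₀R.trans hs)).1
        have h4 : 0 ≤ (n:ℝ) / s := by have := h0 s hs; positivity
        have h5 : δ * (1 - d) ≤ f s / g s * (1 + n / s - f s / g s) :=
          mul_le_mul h1 (by linarith) (by linarith) (by linarith)
        linarith)
    filter_upwards [h1] with s hs
    exact ((le_max_left _ _).trans_lt hbd).trans_le hs
  · intro b hb
    obtain ⟨d, hd1, hdb⟩ := exists_between hb
    have hc : 0 < (d - 1) / 2 := by linarith
    obtain ⟨R, hR⟩ := eventually_atTop.1 ((hn.eventually (gt_mem_nhds hc)).and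
      (eventually_gt_atTop 0))
    have h1 := escape (fun s hs => (h.deriv_ratio (hR s hs).2).neg) (r₀ := R)
      (M := -d) (min_le_left _ (-d)) (min_le_right _ _) hc
      (fun s hs _ h2 => by
        have h3 := (hR s hs).1
        have h4 := rpow_nonneg (h.pos s (hR s hs).2).le (q - 1)
        have h2' : d ≤ f s / g s := by
          have : -(f s / g s) ≤ -d := h2
          linarith
        have h5 : (d - 1) / 2 ≤ f s / g s * (f s / g s - (1 + n / s)) := by
          have : (d - 1) / 2 ≤ f s / g s - (1 + n / s) := by linarith
          nlinarith
        linarith)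
    filter_upwards [h1] with s hs
    have : -d ≤ -(f s / g s) := hs
    linarith

lemma unbounded_of_tendsto_ratio (h : ProfileSys n q f g)
    (hu : Tendsto (fun r => f r / g r) atTop (nhds 1)) :
    ¬ ∃ M : ℝ, ∀ r, 0 < r → r ^ n * exp r * g r ≤ M := by
  rintro ⟨M, hM⟩
  obtain ⟨R, hR⟩ := eventually_atTop.1
    ((hu.eventually (lt_mem_nhds (show (1 / 2 : ℝ) < 1 by norm_num))).and
      (eventually_gt_atTop 0))
  have hR0 := (hR R le_rfl).2
  have hw : 0 < R ^ n * exp R * g R := by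
    have := h.pos R hR0
    positivity
  have h1 := escape (u := fun s => s ^ n * exp s * g s) (r₀ := R) (m := R ^ n * exp R * g R)
    (M := M + 1) (c := R ^ n * exp R * g R / 2)
    (fun s hs => h.deriv_w (hR s hs).2) le_rfl (by have := hM R hR0; linarith) (by linarith)
    (fun s hs h2 _ => by
      have hs0 := (hR s hs).2
      have h3 := (hR s hs).1
      rw [lt_div_iff₀ (h.pos s hs0)] at h3
      have h4 : s ^ n * exp s * (1 / 2 * g s) ≤ s ^ n * exp s * f s := by gcongr
      linarith)
  obtain ⟨s, hs, hs0⟩ := (h1.and (eventually_gt_atTop 0)).exists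
  have := hM s hs0
  linarith

/-- Once `f ~ g`, the equation `f' = -g ^ q` gives `(f ^ (1 - q))' → q - 1`, which integrates to
the algebraic decay rate of `f`. -/
lemma tendsto_f_mul (h : ProfileSys n q f g)
    (hu : Tendsto (fun r => f r / g r) atTop (nhds 1)) :
    Tendsto (fun r => f r * ((q - 1) * r) ^ (1 / (q - 1))) atTop (nhds 1) := by
  have hq : 0 < q - 1 := by linarith [h.hq]
  have h1 : Tendsto (fun r => (q - 1) * (f r / g r) ^ (-q)) atTop (nhds (q - 1)) := by
    have := (hu.rpow_const (p := -q) (Or.inl one_ne_zero)).const_mul (q - 1)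
    simpa using this
  have h2 : Tendsto (fun r => f r ^ (1 - q) / r) atTop (nhds (q - 1)) := by
    refine tendsto_div_id_of_deriv_s12 (fun r hr => ?_) h1
    have hf := h.f_pos hr
    have hg := h.pos r hr
    refine ((h.df r hr).rpow_const (p := 1 - q) (Or.inl hf.ne')).congr_deriv ?_
    rw [show 1 - q - 1 = -q by ring, div_rpow hf.le hg.le, rpow_neg hg.le, div_inv_eq_mul]
    ring
  have h3 : Tendsto (fun r => (f r ^ (1 - q) / r / (q - 1)) ^ (-(1 / (q - 1)))) atTop (nhds 1) := by
    have h4 := h2.div_const (q - 1)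
    rw [div_self hq.ne'] at h4
    simpa using h4.rpow_const (p := -(1 / (q - 1))) (Or.inl one_ne_zero)
  refine h3.congr' ?_
  filter_upwards [eventually_gt_atTop 0] with r hr
  have hf := h.f_pos hr
  rw [div_div, mul_comm r, div_rpow (by positivity) (by positivity), ← rpow_mul hf.le,
    rpow_neg (by positivity), div_inv_eq_mul]
  have : (1 - q) * -(1 / (q - 1)) = 1 := by field_simp; ring
  rw [this, rpow_one]

end ProfileSys

/-- A positive `g` forces `f' < 0`, so that `g = |f'| ^ (p - 1)` and `f' = -g ^ (1 / (p - 1))`. -/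
lemma gFun_rpow {p : ℝ} {f' : ℝ → ℝ} {r : ℝ} (hp : 1 < p) (hg : 0 < gFun p f' r) :
    gFun p f' r = |f' r| ^ (p - 1) ∧ f' r = -(gFun p f' r) ^ (1 / (p - 1)) := by
  have hneg : f' r < 0 := by
    by_contra! hcon
    have : 0 ≤ |f' r| ^ (p - 2) * f' r := mul_nonneg (by positivity) hcon
    unfold gFun at hg
    linarith
  have habs : |f' r| = - f' r := abs_of_neg hneg
  have h1 : gFun p f' r = |f' r| ^ (p - 1) := by
    unfold gFun
    rw [show p - 1 = (p - 2) + 1 by ring, rpow_add_one (abs_pos.2 hneg.ne).ne', habs]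
    ring
  refine ⟨h1, ?_⟩
  rw [h1, ← rpow_mul (abs_nonneg _), mul_one_div_cancel (by linarith), rpow_one, habs, neg_neg]

lemma IsProfileSol.profileSys {N : ℕ} (hN : 2 ≤ N) {p a : ℝ} (hp1 : 1 < p) (hp2 : p < 2)
    {f f' F' : ℝ → ℝ} (hf : IsProfileSol N p a f f' F')
    (hg : ∀ r, 0 < r → 0 < gFun p f' r) :
    ProfileSys (N - 1) (1 / (p - 1)) f (gFun p f') where
  hq := by rw [lt_div_iff₀ (by linarith)]; linarith
  df r hr := by
    rw [← (gFun_rpow hp1 (hg r hr)).2]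
    exact (hf.1 r hr.le).hasDerivAt (Ici_mem_nhds hr)
  dg r hr := by
    obtain ⟨_, _, hF, _, hode, _⟩ := hf
    have h1 := ((hF r hr.le).hasDerivAt (Ici_mem_nhds hr)).neg
    refine h1.congr_deriv ?_
    have h2 := hode r hr
    rw [← (gFun_rpow hp1 (hg r hr)).1] at h2
    have h3 : |f' r| ^ (p - 2) * f' r = - gFun p f' r := by unfold gFun; ring
    rw [h3] at h2
    rw [Nat.cast_sub (by omega : 1 ≤ N)]
    push_cast
    linarith
  pos := hg

lemma wDeriv_eq {N : ℕ} (hN : 2 ≤ N) {p a : ℝ} (hp1 : 1 < p)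
    {f f' F' : ℝ → ℝ} (hf : IsProfileSol N p a f f' F')
    (hg : ∀ r, 0 < r → 0 < gFun p f' r) {r : ℝ} (hr : 0 < r) :
    wDeriv N p f' F' r = rho N r * f r := by
  obtain ⟨_, _, _, _, hode, _⟩ := hf
  have h2 := hode r hr
  rw [← (gFun_rpow hp1 (hg r hr)).1,
    show |f' r| ^ (p - 2) * f' r = - gFun p f' r by unfold gFun; ring] at h2
  have h3 : F' r = ((N : ℝ) - 1) / r * gFun p f' r - f r + gFun p f' r := by linarith
  unfold wDeriv rho rho'
  rw [h3]
  obtain ⟨m, rfl⟩ := Nat.exists_eq_add_of_le' hN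
  simp only [Nat.add_sub_cancel, show m + 2 - 1 = m + 1 by omega]
  field_simp
  ring

/-! ### The dichotomy and the asymptotics -/

/-- if `g(·;a) > 0` on `(0,∞)`, then `w(·;a)` is unbounded on `(0,∞)` iff
`w'/w → 1` at infinity; and if unbounded,
`w(r;a)((2-p)r/(p-1))^{(p-1)/(2-p)}/ρ(r) → 1`, equivalently
`f(r;a)((2-p)r/(p-1))^{(p-1)/(2-p)} → 1`, as `r → ∞`. -/
theorem stmt12 (N : ℕ) (hN : 2 ≤ N) (p : ℝ)
    (hp1 : 2 * (N : ℝ) / ((N : ℝ) + 1) < p) (hp2 : p < 2)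
    (a : ℝ) (ha : 0 < a)
    (f f' F' : ℝ → ℝ) (hf : IsProfileSol N p a f f' F')
    (hg : ∀ r, 0 < r → 0 < gFun p f' r) :
    ((¬ ∃ M : ℝ, ∀ r, 0 < r → |wFun N p f' r| ≤ M) ↔
      Filter.Tendsto (fun r => wDeriv N p f' F' r / wFun N p f' r) Filter.atTop (nhds 1)) ∧
    ((¬ ∃ M : ℝ, ∀ r, 0 < r → |wFun N p f' r| ≤ M) →
      Filter.Tendsto
        (fun r => wFun N p f' r * ((2 - p) * r / (p - 1)) ^ ((p - 1) / (2 - p)) / rho N r)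
        Filter.atTop (nhds 1) ∧
      Filter.Tendsto (fun r => f r * ((2 - p) * r / (p - 1)) ^ ((p - 1) / (2 - p)))
        Filter.atTop (nhds 1)) := by
  have hp : 1 < p := by
    refine lt_trans ?_ hp1
    have : (2:ℝ) ≤ N := by exact_mod_cast hN
    rw [lt_div_iff₀ (by linarith)]
    linarith
  have hs := hf.profileSys hN hp hp2 hg
  have hw : ∀ r, 0 < r → 0 < rho N r := fun r hr => by unfold rho; positivity
  have hbdd : (∃ M : ℝ, ∀ r, 0 < r → |wFun N p f' r| ≤ M) ↔
      ∃ M : ℝ, ∀ r, 0 < r → r ^ (N - 1) * exp r * gFun p f' r ≤ M := by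
    refine exists_congr fun M => forall₂_congr fun r hr => ?_
    rw [wFun, abs_of_pos (mul_pos (hw r hr) (hg r hr)), rho]
  have hratio : (fun r => wDeriv N p f' F' r / wFun N p f' r) =ᶠ[atTop]
      fun r => f r / gFun p f' r := by
    filter_upwards [eventually_gt_atTop 0] with r hr
    rw [wDeriv_eq hN hp hf hg hr, wFun, mul_div_mul_left _ _ (hw r hr).ne']
  rw [hbdd, tendsto_congr' hratio]
  refine ⟨⟨hs.tendsto_ratio, hs.unbounded_of_tendsto_ratio⟩, fun hunb => ?_⟩
  have hu := hs.tendsto_ratio hunb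
  have hF : Tendsto (fun r => f r * ((2 - p) * r / (p - 1)) ^ ((p - 1) / (2 - p)))
      atTop (nhds 1) := by
    have hp0 : p - 1 ≠ 0 := by linarith
    have hq : 1 / (p - 1) - 1 = (2 - p) / (p - 1) := by field_simp; ring
    have := hs.tendsto_f_mul hu
    rw [hq, one_div_div] at this
    simpa only [div_mul_eq_mul_div] using this
  refine ⟨?_, hF⟩
  have h1 := hF.div hu one_ne_zero
  rw [div_one] at h1
  refine h1.congr' ?_
  filter_upwards [eventually_gt_atTop 0] with r hr
  have h2 := (hw r hr).ne'
  have h3 := (hg r hr).ne'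
  have h4 := (hs.f_pos hr).ne'
  simp only [Pi.div_apply, wFun]
  field_simp
end
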